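/- arXiv:1905.07088 — 5 statements merged into one kernel-verified Lean document; each statement's English description precedes it below -/
import Mathlib

section
/- Define f(θ; x, v) = v^⊤ ∇_x s_m(x;θ) v + ½ (v^⊤ s_m(x;θ))². Suppose that for all θ₁, θ₂ ∈ Θ, ‖∇_x s_m(x;θ₁) − ∇_x s_m(x;θ₂)‖_F ≤ L₁(x) ‖θ₁ − θ₂‖₂ and ‖s_m(x;θ₁) s_m(x;θ₁)^⊤ − s_m(x;θ₂) s_m(x;θ₂)^⊤‖_F ≤ L₂(x) ‖θ₁ − θ₂‖₂, with E_{p_d}[L₁²(x)] < ∞ and E_{p_d}[L₂²(x)] < ∞, and that E_{p_v}[‖v v^⊤‖_F²] < ∞. Then for all θ₁, θ₂ ∈ Θ, |f(θ₁; x, v) − f(θ₂; x, v)| ≤ L(x, v) ‖θ₁ − θ₂‖₂ where L(x, v) = √(Σ_{i,j} v_i² v_j²) · √(2 L₁²(x) + ½ L₂²(x)), and moreover E_{p_d, p_v}[L²(x, v)] < ∞. (Lemma B.3 of the paper.) -/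
open MeasureTheory RealInnerProductSpace

noncomputable section

/-- The score function `∇ₓ log p(x)` of a density `p` on `ℝ^D`. -/
def score {D : ℕ} (p : EuclideanSpace ℝ (Fin D) → ℝ) (x : EuclideanSpace ℝ (Fin D)) :
    EuclideanSpace ℝ (Fin D) :=
  gradient (fun y => Real.log (p y)) x


theorem aux_cs {D : ℕ} (w M : Fin D → Fin D → ℝ) :
    |∑ i, ∑ j, w i j * M i j| ≤
      Real.sqrt (∑ i, ∑ j, w i j ^ 2) * Real.sqrt (∑ i, ∑ j, M i j ^ 2) := by
  rw [← Real.sqrt_mul (by positivity)]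
  apply Real.abs_le_sqrt
  have h := Finset.sum_mul_sq_le_sq_mul_sq (Finset.univ : Finset (Fin D × Fin D))
    (fun p => w p.1 p.2) (fun p => M p.1 p.2)
  simpa only [Fintype.sum_prod_type] using h

theorem aux_quad {D : ℕ} (A : EuclideanSpace ℝ (Fin D) →L[ℝ] EuclideanSpace ℝ (Fin D))
    (v : EuclideanSpace ℝ (Fin D)) :
    ⟪v, A v⟫ = ∑ i, ∑ j, (v i * v j) * (A (EuclideanSpace.single j 1)) i := by
  have hv : A v = ∑ j, v j • A (EuclideanSpace.single j 1) := by
    have h := (EuclideanSpace.basisFun (Fin D) ℝ).sum_repr v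
    simp only [EuclideanSpace.basisFun_repr, EuclideanSpace.basisFun_apply] at h
    conv_lhs => rw [← h]
    simp [map_sum]
  rw [hv, PiLp.inner_apply]
  refine Finset.sum_congr rfl fun i _ => ?_
  simp only [WithLp.ofLp_sum, WithLp.ofLp_smul, Finset.sum_apply, Pi.smul_apply, smul_eq_mul,
    RCLike.inner_apply, conj_trivial, Finset.sum_mul]
  exact Finset.sum_congr rfl fun j _ => by ring

theorem aux_sq {D : ℕ} (v s : EuclideanSpace ℝ (Fin D)) :
    ⟪v, s⟫ ^ 2 = ∑ i, ∑ j, (v i * v j) * (s i * s j) := by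
  rw [PiLp.inner_apply, sq, Finset.sum_mul_sum]
  refine Finset.sum_congr rfl fun i _ => Finset.sum_congr rfl fun j _ => ?_
  simp only [RCLike.inner_apply, conj_trivial]
  ring

/-- **Lemma B.3 of the paper.** If `∇ₓ s_m(x;·)` and `s_m(x;·) s_m(x;·)ᵀ` are Lipschitz
in `θ` (in Frobenius norm) with square-integrable constants `L₁, L₂`, and the projection
vectors satisfy `E[‖v vᵀ‖_F²] < ∞`, then `f(θ;x,v) = vᵀ ∇ₓ s_m(x;θ) v + ½ (vᵀ s_m(x;θ))²`
is Lipschitz in `θ` with constant `L(x,v) = √(Σᵢⱼ vᵢ² vⱼ²) · √(2L₁²(x) + ½L₂²(x))`,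
and `E_{p_d,p_v}[L²(x,v)] < ∞`. -/
theorem ssm_integrand_lipschitz
    (D K : ℕ) (hD : 1 ≤ D)
    (Θ : Set (EuclideanSpace ℝ (Fin K)))
    (pd : EuclideanSpace ℝ (Fin D) → ℝ)
    (pm : EuclideanSpace ℝ (Fin K) → EuclideanSpace ℝ (Fin D) → ℝ)
    (μv : Measure (EuclideanSpace ℝ (Fin D))) [IsProbabilityMeasure μv]
    -- data density: positive, differentiable, integrates to one
    (hpd_pos : ∀ x, 0 < pd x) (hpd_diff : Differentiable ℝ pd)
    (hpd_prob : ∫ x, pd x = 1)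
    -- model densities: positive, twice continuously differentiable
    (hpm_pos : ∀ θ x, 0 < pm θ x) (hpm_smooth : ∀ θ, ContDiff ℝ 2 (pm θ))
    -- Lipschitz continuity of the Hessian `∇ₓ s_m` in Frobenius norm
    (L1 L2 : EuclideanSpace ℝ (Fin D) → ℝ)
    (hL1 : ∀ θ₁ ∈ Θ, ∀ θ₂ ∈ Θ, ∀ x,
      Real.sqrt (∑ i, ∑ j, ((fderiv ℝ (score (pm θ₁)) x (EuclideanSpace.single j 1)) i
          - (fderiv ℝ (score (pm θ₂)) x (EuclideanSpace.single j 1)) i) ^ 2)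
        ≤ L1 x * ‖θ₁ - θ₂‖)
    -- Lipschitz continuity of `s_m s_mᵀ` in Frobenius norm
    (hL2 : ∀ θ₁ ∈ Θ, ∀ θ₂ ∈ Θ, ∀ x,
      Real.sqrt (∑ i, ∑ j, (score (pm θ₁) x i * score (pm θ₁) x j
          - score (pm θ₂) x i * score (pm θ₂) x j) ^ 2)
        ≤ L2 x * ‖θ₁ - θ₂‖)
    -- square integrability of the Lipschitz constants: E[L₁²] < ∞, E[L₂²] < ∞
    (hL1int : Integrable (fun x => pd x * L1 x ^ 2))
    (hL2int : Integrable (fun x => pd x * L2 x ^ 2))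
    -- bounded fourth moments of projection vectors: E[‖v vᵀ‖_F²] < ∞
    (hv4 : Integrable (fun v => ∑ i, ∑ j, (v i * v j) ^ 2) μv) :
    (∀ θ₁ ∈ Θ, ∀ θ₂ ∈ Θ, ∀ (x v : EuclideanSpace ℝ (Fin D)),
      |(⟪v, fderiv ℝ (score (pm θ₁)) x v⟫ + (1/2) * ⟪v, score (pm θ₁) x⟫ ^ 2)
          - (⟪v, fderiv ℝ (score (pm θ₂)) x v⟫ + (1/2) * ⟪v, score (pm θ₂) x⟫ ^ 2)|
        ≤ (Real.sqrt (∑ i, ∑ j, (v i) ^ 2 * (v j) ^ 2)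
            * Real.sqrt (2 * L1 x ^ 2 + (1/2) * L2 x ^ 2)) * ‖θ₁ - θ₂‖)
    ∧ (∫⁻ v, ∫⁻ x, ENNReal.ofReal (pd x *
          (Real.sqrt (∑ i, ∑ j, (v i) ^ 2 * (v j) ^ 2)
            * Real.sqrt (2 * L1 x ^ 2 + (1/2) * L2 x ^ 2)) ^ 2) ∂volume ∂μv) < ⊤ := by
  constructor
  · intro θ₁ h₁ θ₂ h₂ x v
    have a1 := hL1 θ₁ h₁ θ₂ h₂ x
    have a2 := hL2 θ₁ h₁ θ₂ h₂ x
    have c1 := aux_cs (fun i j => v i * v j)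
      (fun i j => (fderiv ℝ (score (pm θ₁)) x (EuclideanSpace.single j 1)) i
          - (fderiv ℝ (score (pm θ₂)) x (EuclideanSpace.single j 1)) i)
    have c2 := aux_cs (fun i j => v i * v j)
      (fun i j => score (pm θ₁) x i * score (pm θ₁) x j
          - score (pm θ₂) x i * score (pm θ₂) x j)
    simp only [mul_sub, Finset.sum_sub_distrib] at c1 c2
    rw [← aux_quad, ← aux_quad] at c1
    rw [← aux_sq, ← aux_sq] at c2
    simp only [mul_pow] at c1 c2
    set S := Real.sqrt (∑ i, ∑ j, (v i) ^ 2 * (v j) ^ 2) with hS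
    have hS0 : 0 ≤ S := Real.sqrt_nonneg _
    have d1 := c1.trans (mul_le_mul_of_nonneg_left a1 hS0)
    have d2 := c2.trans (mul_le_mul_of_nonneg_left a2 hS0)
    have hR : L1 x + (1/2) * L2 x ≤ Real.sqrt (2 * L1 x ^ 2 + (1/2) * L2 x ^ 2) := by
      apply Real.le_sqrt_of_sq_le
      nlinarith [sq_nonneg (L1 x - (1/2) * L2 x)]
    have hf := mul_le_mul_of_nonneg_right (mul_le_mul_of_nonneg_left hR hS0)
      (norm_nonneg (θ₁ - θ₂))
    refine le_trans ?_ hf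
    rw [abs_le] at d1 d2 ⊢
    constructor <;> linarith [d1.1, d1.2, d2.1, d2.2]
  · have hB : Integrable (fun x => pd x * (2 * L1 x ^ 2 + (1/2) * L2 x ^ 2)) := by
      refine ((hL1int.const_mul 2).add (hL2int.const_mul (1/2))).congr ?_
      exact Filter.Eventually.of_forall fun x => by simp only [Pi.add_apply]; ring
    have key : ∀ v x : EuclideanSpace ℝ (Fin D), ENNReal.ofReal (pd x *
          (Real.sqrt (∑ i, ∑ j, (v i) ^ 2 * (v j) ^ 2)
            * Real.sqrt (2 * L1 x ^ 2 + (1/2) * L2 x ^ 2)) ^ 2)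
        = ENNReal.ofReal (∑ i, ∑ j, (v i * v j) ^ 2)
          * ENNReal.ofReal (pd x * (2 * L1 x ^ 2 + (1/2) * L2 x ^ 2)) := by
      intro v x
      rw [← ENNReal.ofReal_mul (by positivity), mul_pow, Real.sq_sqrt (by positivity),
        Real.sq_sqrt (by positivity)]
      simp only [mul_pow]
      congr 1
      ring
    simp only [key]
    simp only [lintegral_const_mul' _ _ ENNReal.ofReal_ne_top]
    have hBt := hB.lintegral_lt_top
    rw [lintegral_mul_const' _ _ hBt.ne]
    exact ENNReal.mul_lt_top hv4.lintegral_lt_top hBt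
end
end

section
/- Assume: the regularity assumptions E_{p_d}[‖s_m(x;θ)‖²] < ∞ for all θ and E_{p_d}[‖s_d(x)‖²] < ∞; the projection assumptions E_{p_v}[‖v‖²] < ∞, E_{p_v}[v v^⊤] positive definite and E_{p_v}[‖v v^⊤‖_F²] < ∞; the boundary assumption s_m(x;θ) p_d(x) → 0 as ‖x‖ → ∞ for all θ; Θ compact; the model family well-specified and identifiable (p_d = p_m(·;θ*), and p_m(·;θ) ≠ p_m(·;θ*) whenever θ ≠ θ*); all densities strictly positive; and the Lipschitz assumptions ‖∇_x s_m(x;θ₁) − ∇_x s_m(x;θ₂)‖_F ≤ L₁(x)‖θ₁−θ₂‖₂, ‖s_m(x;θ₁)s_m(x;θ₁)^⊤ − s_m(x;θ₂)s_m(x;θ₂)^⊤‖_F ≤ L₂(x)‖θ₁−θ₂‖₂ with E_{p_d}[L₁²] < ∞, E_{p_d}[L₂²] < ∞. Then for every fixed M ∈ ℕ⁺, any sequence of estimators θ̂_{N,M} ∈ argmin_{θ∈Θ} Ĵ(θ; x_1^N, v_{11}^{NM}) converges in probability to θ* as N → ∞. (Theorem 2 of the paper: consistency of sliced score matching.) 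-/
open MeasureTheory Filter RealInnerProductSpace

noncomputable section

/-- The sliced score matching integrand
`f(θ; x, v) = vᵀ ∇ₓ s_m(x;θ) v + ½ (vᵀ s_m(x;θ))²`. -/
def ssmF {D K : ℕ} (pm : EuclideanSpace ℝ (Fin K) → EuclideanSpace ℝ (Fin D) → ℝ)
    (θ : EuclideanSpace ℝ (Fin K)) (x v : EuclideanSpace ℝ (Fin D)) : ℝ :=
  ⟪v, fderiv ℝ (score (pm θ)) x v⟫ + (1/2) * ⟪v, score (pm θ) x⟫ ^ 2


lemma reshape_mp {E : Type*} [MeasurableSpace E] (μd μv : Measure E)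
    [IsProbabilityMeasure μd] [IsProbabilityMeasure μv] (N M : ℕ) :
    MeasurePreserving (fun ω : (Fin N → E) × (Fin N × Fin M → E) =>
        (fun i => (ω.1 i, fun j => ω.2 (i, j)) : Fin N → E × (Fin M → E)))
      ((Measure.pi fun _ : Fin N => μd).prod (Measure.pi fun _ : Fin N × Fin M => μv))
      (Measure.pi fun _ : Fin N => μd.prod (Measure.pi fun _ : Fin M => μv)) := by
  have h1 : MeasurePreserving (MeasurableEquiv.curry (Fin N) (Fin M) E)
      (Measure.pi fun _ : Fin N × Fin M => μv)
      (Measure.pi fun _ : Fin N => Measure.pi fun _ : Fin M => μv) := by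
    refine ⟨MeasurableEquiv.measurable _, ?_⟩
    have := Measure.infinitePi_map_curry (fun (_ : Fin N) (_ : Fin M) => μv)
    simpa only [Measure.infinitePi_eq_pi] using this
  have h2 := (measurePreserving_arrowProdEquivProdArrow E (Fin M → E) (Fin N)
    (fun _ => μd) (fun _ => Measure.pi fun _ : Fin M => μv)).symm
  exact h2.comp ((MeasurePreserving.id _).prod h1)

lemma weak_lln {Ω : Type*} [MeasurableSpace Ω] (P : Measure Ω) [IsProbabilityMeasure P]
    (Y : Ω → ℝ) (hY : MemLp Y 2 P) (δ : ℝ) (hδ : 0 < δ) :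
    Tendsto (fun N : ℕ => (Measure.pi fun _ : Fin N => P)
      {ω | N * δ ≤ |∑ i, Y (ω i) - N * ∫ y, Y y ∂P|}) atTop (nhds 0) := by
  have key : ∀ N : ℕ, 0 < N → (Measure.pi fun _ : Fin N => P)
      {ω | N * δ ≤ |∑ i, Y (ω i) - N * ∫ y, Y y ∂P|}
      ≤ ENNReal.ofReal ((ProbabilityTheory.variance Y P / δ^2) / N) := by
    intro N hN
    have hN' : (0:ℝ) < N := by exact_mod_cast hN
    have hm : ∀ i : Fin N, MemLp (fun ω : Fin N → Ω => Y (ω i)) 2 (Measure.pi fun _ => P) :=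
      fun i => hY.comp_measurePreserving (measurePreserving_eval (fun _ : Fin N => P) i)
    have hS : MemLp (∑ i, fun ω : Fin N → Ω => Y (ω i)) 2 (Measure.pi fun _ => P) :=
      memLp_finsetSum' _ fun i _ => hm i
    have hv := ProbabilityTheory.variance_sum_pi (μ := fun _ : Fin N => P)
      (X := fun _ => Y) (fun _ => hY)
    have hE : ∫ ω, (∑ i, fun ω : Fin N → Ω => Y (ω i)) ω ∂(Measure.pi fun _ => P)
        = N * ∫ y, Y y ∂P := by
      simp only [Finset.sum_apply]
      rw [integral_finsetSum _ fun i _ => (hm i).integrable (by norm_num)]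
      have : ∀ i : Fin N, ∫ ω : Fin N → Ω, Y (ω i) ∂(Measure.pi fun _ => P) = ∫ y, Y y ∂P := by
        intro i
        have hp := (measurePreserving_eval (fun _ : Fin N => P) i)
        have := integral_map (μ := Measure.pi fun _ : Fin N => P) (φ := Function.eval i)
          hp.measurable.aemeasurable (f := Y) (by rw [hp.map_eq]; exact hY.1)
        rw [hp.map_eq] at this
        exact this.symm
      simp [this]
    have hc := ProbabilityTheory.meas_ge_le_variance_div_sq hS (c := N * δ) (by positivity)
    rw [hE, hv] at hc
    simp only [Finset.sum_apply] at hc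
    refine hc.trans (le_of_eq ?_)
    congr 1
    simp
    field_simp
  have hlim : Tendsto (fun N : ℕ => ENNReal.ofReal ((ProbabilityTheory.variance Y P / δ^2) / N))
      atTop (nhds 0) := by
    have := ENNReal.tendsto_ofReal (tendsto_const_div_atTop_nhds_zero_nat
      (ProbabilityTheory.variance Y P / δ^2))
    simpa using this
  refine tendsto_of_tendsto_of_tendsto_of_le_of_le' tendsto_const_nhds hlim
    (Eventually.of_forall fun _ => zero_le) ?_
  filter_upwards [eventually_gt_atTop 0] with N hN using key N hN

lemma quad_bound {D : ℕ} (a : Fin D → Fin D → ℝ) (v : EuclideanSpace ℝ (Fin D)) :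
    |∑ i, ∑ j, a i j * (v i * v j)| ≤ Real.sqrt (∑ i, ∑ j, a i j ^ 2) * ‖v‖ ^ 2 := by
  have hn : ∑ i, ∑ j, (v i * v j)^2 = (‖v‖^2)^2 := by
    rw [EuclideanSpace.real_norm_sq_eq, sq (∑ i, v i ^ 2), Finset.sum_mul_sum]
    simp only [mul_pow]
  have := Finset.sum_mul_sq_le_sq_mul_sq (Finset.univ : Finset (Fin D × Fin D))
    (fun p => a p.1 p.2) (fun p => v p.1 * v p.2)
  simp only [Fintype.sum_prod_type] at this
  rw [hn] at this
  rw [← Real.sqrt_sq (by positivity : 0 ≤ ‖v‖^2), ← Real.sqrt_mul' _ (by positivity)]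
  exact Real.abs_le_sqrt this

lemma inner_clm {D : ℕ} (A : EuclideanSpace ℝ (Fin D) →L[ℝ] EuclideanSpace ℝ (Fin D))
    (v : EuclideanSpace ℝ (Fin D)) :
    ⟪v, A v⟫ = ∑ i, ∑ j, (A (EuclideanSpace.single j 1)) i * (v i * v j) := by
  have h : A v = ∑ j, v j • A (EuclideanSpace.single j 1) := by
    conv_lhs => rw [show v = ∑ j, v j • EuclideanSpace.single j (1:ℝ) by
      ext i; simp [Finset.sum_apply, Pi.single_apply]]
    simp
  rw [h]
  simp only [PiLp.inner_apply, WithLp.ofLp_sum, Finset.sum_apply]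
  refine Finset.sum_congr rfl fun i _ => ?_
  simp [Finset.sum_mul]
  refine Finset.sum_congr rfl fun j _ => ?_
  ring

lemma inner_sq {D : ℕ} (s v : EuclideanSpace ℝ (Fin D)) :
    ⟪v, s⟫ ^ 2 = ∑ i, ∑ j, (s i * s j) * (v i * v j) := by
  simp only [PiLp.inner_apply]
  rw [sq, Finset.sum_mul_sum]
  refine Finset.sum_congr rfl fun i _ => Finset.sum_congr rfl fun j _ => ?_
  simp; ring

lemma wd_integrable {D : ℕ} {pd : EuclideanSpace ℝ (Fin D) → ℝ} (hp : Continuous pd)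
    (hpos : ∀ x, 0 < pd x) (g : EuclideanSpace ℝ (Fin D) → ℝ) :
    Integrable g (volume.withDensity (fun x => ENNReal.ofReal (pd x))) ↔
      Integrable (fun x => pd x * g x) := by
  rw [integrable_withDensity_iff_integrable_smul' (by fun_prop) (by simp)]
  simp [ENNReal.toReal_ofReal (hpos _).le]

lemma wd_integral {D : ℕ} {pd : EuclideanSpace ℝ (Fin D) → ℝ} (hp : Continuous pd)
    (hpos : ∀ x, 0 < pd x) (g : EuclideanSpace ℝ (Fin D) → ℝ) :
    ∫ x, g x ∂(volume.withDensity (fun x => ENNReal.ofReal (pd x))) = ∫ x, pd x * g x := by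
  rw [integral_withDensity_eq_integral_toReal_smul (by fun_prop) (by simp)]
  simp [ENNReal.toReal_ofReal (hpos _).le]

lemma log_contDiff {D : ℕ} {p : EuclideanSpace ℝ (Fin D) → ℝ} (hp : ContDiff ℝ 2 p)
    (hpos : ∀ x, 0 < p x) : ContDiff ℝ 2 (fun x => Real.log (p x)) :=
  hp.log fun x => (hpos x).ne'

lemma score_contDiff {D : ℕ} {p : EuclideanSpace ℝ (Fin D) → ℝ} (hp : ContDiff ℝ 2 p)
    (hpos : ∀ x, 0 < p x) : ContDiff ℝ 1 (score p) := by
  have h := (log_contDiff hp hpos).fderiv_right (m := 1) (by norm_num)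
  exact (InnerProductSpace.toDual ℝ (EuclideanSpace ℝ (Fin D))).symm.contDiff.comp h

lemma inner_score {D : ℕ} (p : EuclideanSpace ℝ (Fin D) → ℝ) (x v : EuclideanSpace ℝ (Fin D)) :
    ⟪v, score p x⟫ = fderiv ℝ (fun y => Real.log (p y)) x v := by
  rw [real_inner_comm]
  simp [score, gradient]

lemma fderiv_eq_score {D : ℕ} {p : EuclideanSpace ℝ (Fin D) → ℝ} (hp : ContDiff ℝ 2 p)
    (hpos : ∀ x, 0 < p x) (x v : EuclideanSpace ℝ (Fin D)) :
    fderiv ℝ p x v = p x * ⟪v, score p x⟫ := by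
  rw [inner_score, fderiv.log ((hp.differentiable (by norm_num)) x) (hpos x).ne']
  have := (hpos x).ne'
  simp [this]

lemma eq_of_score_eq {D : ℕ} {p q : EuclideanSpace ℝ (Fin D) → ℝ} (hp : ContDiff ℝ 2 p)
    (hpos : ∀ x, 0 < p x) (hq : ContDiff ℝ 2 q) (hqpos : ∀ x, 0 < q x)
    (hpi : ∫ x, p x = 1) (hqi : ∫ x, q x = 1) (h : ∀ x, score q x = score p x) : q = p := by
  have hdiff : Differentiable ℝ (fun x => Real.log (q x) - Real.log (p x)) :=
    ((log_contDiff hq hqpos).differentiable (by norm_num)).sub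
      ((log_contDiff hp hpos).differentiable (by norm_num))
  have hc : ∀ x y, Real.log (q x) - Real.log (p x) = Real.log (q y) - Real.log (p y) := by
    refine is_const_of_fderiv_eq_zero (𝕜 := ℝ) hdiff fun x => ?_
    ext v
    rw [fderiv_fun_sub ((log_contDiff hq hqpos).differentiable (by norm_num) x)
      ((log_contDiff hp hpos).differentiable (by norm_num) x)]
    simp [← inner_score, h]
  have hq' : ∀ x, q x = Real.exp (Real.log (q 0) - Real.log (p 0)) * p x := by
    intro x
    rw [← hc x 0, Real.exp_sub, Real.exp_log (hqpos x), Real.exp_log (hpos x)]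
    have := (hpos x).ne'
    field_simp
  have h1 : Real.exp (Real.log (q 0) - Real.log (p 0)) = 1 := by
    have : ∫ x, q x = Real.exp (Real.log (q 0) - Real.log (p 0)) * ∫ x, p x := by
      rw [← integral_const_mul]
      exact integral_congr_ae (Eventually.of_forall hq')
    rw [hpi, hqi] at this
    linarith
  funext x
  rw [hq' x, h1, one_mul]

lemma population_v {D : ℕ} {p q : EuclideanSpace ℝ (Fin D) → ℝ} (hp : ContDiff ℝ 2 p)
    (hpos : ∀ x, 0 < p x) (hq : ContDiff ℝ 2 q) (hqpos : ∀ x, 0 < q x)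
    (μ : Measure (EuclideanSpace ℝ (Fin D))) [IsProbabilityMeasure μ]
    (hμ : μ = volume.withDensity (fun x => ENNReal.ofReal (p x)))
    (hs : MemLp (score q) 2 μ) (hs0 : MemLp (score p) 2 μ)
    (v : EuclideanSpace ℝ (Fin D))
    (hH : Integrable (fun x => ⟪v, fderiv ℝ (score q) x v⟫ - ⟪v, fderiv ℝ (score p) x v⟫) μ) :
    ∫ x, ((⟪v, fderiv ℝ (score q) x v⟫ + (1/2) * ⟪v, score q x⟫ ^ 2)
      - (⟪v, fderiv ℝ (score p) x v⟫ + (1/2) * ⟪v, score p x⟫ ^ 2)) ∂μ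
      = (1/2) * ∫ x, ⟪v, score q x - score p x⟫ ^ 2 ∂μ := by
  have hq1 := (score_contDiff hq hqpos).differentiable (by norm_num)
  have hp1 := (score_contDiff hp hpos).differentiable (by norm_num)
  set a : EuclideanSpace ℝ (Fin D) → ℝ := fun x => ⟪v, score q x⟫ with ha
  set b : EuclideanSpace ℝ (Fin D) → ℝ := fun x => ⟪v, score p x⟫ with hb
  have hma : MemLp a 2 μ := hs.const_inner v
  have hmb : MemLp b 2 μ := hs0.const_inner v
  have hgd : Differentiable ℝ (fun x => a x - b x) := by
    intro x
    exact ((differentiableAt_const v).inner ℝ (hq1 x)).sub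
      ((differentiableAt_const v).inner ℝ (hp1 x))
  have hfg : ∀ x, fderiv ℝ (fun x => a x - b x) x v
      = ⟪v, fderiv ℝ (score q) x v⟫ - ⟪v, fderiv ℝ (score p) x v⟫ := by
    intro x
    rw [fderiv_fun_sub ((differentiableAt_const v).inner ℝ (hq1 x))
      ((differentiableAt_const v).inner ℝ (hp1 x))]
    rw [ContinuousLinearMap.sub_apply, fderiv_inner_apply ℝ (differentiableAt_const v) (hq1 x),
      fderiv_inner_apply ℝ (differentiableAt_const v) (hp1 x)]
    simp
  have hbab : Integrable (fun x => b x * (a x - b x)) μ := hmb.integrable_mul (hma.sub hmb)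
  have hab : Integrable (fun x => a x - b x) μ := (hma.sub hmb).integrable (by norm_num)
  have ibp : ∫ x, (⟪v, fderiv ℝ (score q) x v⟫ - ⟪v, fderiv ℝ (score p) x v⟫) ∂μ
      = - ∫ x, b x * (a x - b x) ∂μ := by
    have := integral_mul_fderiv_eq_neg_fderiv_mul_of_integrable (μ := volume) (f := p)
      (g := fun x => a x - b x) (v := v) (𝕜 := ℝ)
      (by
        rw [hμ, wd_integrable hp.continuous hpos] at hbab
        refine hbab.congr (Eventually.of_forall fun x => ?_)
        simp only [fderiv_eq_score hp hpos, hb]; ring)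
      (by
        rw [hμ, wd_integrable hp.continuous hpos] at hH
        simpa only [hfg] using hH)
      (by
        rw [hμ, wd_integrable hp.continuous hpos] at hab
        exact hab)
      (fun x _ => hp.differentiable (by norm_num) x) (fun x _ => hgd x)
    rw [hμ, wd_integral hp.continuous hpos, wd_integral hp.continuous hpos]
    simp only [hfg] at this
    rw [this]
    congr 1
    refine integral_congr_ae (Eventually.of_forall fun x => ?_)
    simp only [fderiv_eq_score hp hpos, hb]; ring
  have e1 : ∀ x, ((⟪v, fderiv ℝ (score q) x v⟫ + (1/2) * a x ^ 2)
      - (⟪v, fderiv ℝ (score p) x v⟫ + (1/2) * b x ^ 2))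
      = (⟪v, fderiv ℝ (score q) x v⟫ - ⟪v, fderiv ℝ (score p) x v⟫)
        + (b x * (a x - b x) + (1/2) * (a x - b x) ^ 2) := by intro x; ring
  have e2 : ∀ x, ⟪v, score q x - score p x⟫ = a x - b x := fun x => inner_sub_right _ _ _
  simp only [e2]
  rw [integral_congr_ae (Eventually.of_forall e1), integral_add hH, integral_add hbab, ibp,
    integral_const_mul]
  · ring
  · exact (hma.sub hmb).integrable_sq.const_mul _
  · exact hbab.add ((hma.sub hmb).integrable_sq.const_mul _)

lemma population_pos {D : ℕ} {p q : EuclideanSpace ℝ (Fin D) → ℝ} (hp : ContDiff ℝ 2 p)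
    (hpos : ∀ x, 0 < p x) (hq : ContDiff ℝ 2 q) (hqpos : ∀ x, 0 < q x)
    (hpi : ∫ x, p x = 1) (hqi : ∫ x, q x = 1) (hne : q ≠ p)
    (μ μv : Measure (EuclideanSpace ℝ (Fin D))) [IsProbabilityMeasure μ] [IsProbabilityMeasure μv]
    (hμ : μ = volume.withDensity (fun x => ENNReal.ofReal (p x)))
    (hs : MemLp (score q) 2 μ) (hs0 : MemLp (score p) 2 μ)
    (hv_mom : Integrable (fun v => ‖v‖ ^ 2) μv)
    (hv_posdef : ∀ w : EuclideanSpace ℝ (Fin D), w ≠ 0 → 0 < ∫ v, ⟪v, w⟫ ^ 2 ∂μv)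
    (hH : ∀ v, Integrable (fun x =>
      ⟪v, fderiv ℝ (score q) x v⟫ - ⟪v, fderiv ℝ (score p) x v⟫) μ)
    (hF : Integrable (fun z : EuclideanSpace ℝ (Fin D) × EuclideanSpace ℝ (Fin D) =>
      ((⟪z.2, fderiv ℝ (score q) z.1 z.2⟫ + (1/2) * ⟪z.2, score q z.1⟫ ^ 2)
      - (⟪z.2, fderiv ℝ (score p) z.1 z.2⟫ + (1/2) * ⟪z.2, score p z.1⟫ ^ 2))) (μ.prod μv)) :
    0 < ∫ z : EuclideanSpace ℝ (Fin D) × EuclideanSpace ℝ (Fin D),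
      ((⟪z.2, fderiv ℝ (score q) z.1 z.2⟫ + (1/2) * ⟪z.2, score q z.1⟫ ^ 2)
      - (⟪z.2, fderiv ℝ (score p) z.1 z.2⟫ + (1/2) * ⟪z.2, score p z.1⟫ ^ 2)) ∂(μ.prod μv) := by
  rw [integral_prod_symm _ hF]
  simp only [fun v => population_v hp hpos hq hqpos μ hμ hs hs0 v (hH v)]
  rw [integral_const_mul]
  have hsc := (score_contDiff hq hqpos).continuous
  have hs0c := (score_contDiff hp hpos).continuous
  set u : EuclideanSpace ℝ (Fin D) → EuclideanSpace ℝ (Fin D) :=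
    fun x => score q x - score p x with hu
  have huc : Continuous u := hsc.sub hs0c
  have hul : MemLp u 2 μ := hs.sub hs0
  have hu2 : Integrable (fun x => ‖u x‖ ^ 2) μ := hul.norm.integrable_sq
  have hprod : Integrable (fun z : EuclideanSpace ℝ (Fin D) × EuclideanSpace ℝ (Fin D) =>
      ⟪z.2, u z.1⟫ ^ 2) (μ.prod μv) := by
    refine (hu2.mul_prod hv_mom).mono' (by fun_prop) (Eventually.of_forall fun z => ?_)
    have := abs_real_inner_le_norm z.2 (u z.1)
    rw [Real.norm_eq_abs, abs_pow, ← mul_pow, mul_comm (‖u z.1‖)]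
    gcongr
  have hswap : ∫ v, ∫ x, ⟪v, u x⟫ ^ 2 ∂μ ∂μv = ∫ x, ∫ v, ⟪v, u x⟫ ^ 2 ∂μv ∂μ :=
    (integral_integral_swap (f := fun x v => ⟪v, u x⟫ ^ 2) hprod).symm
  rw [hswap]
  have hnn : ∀ x, 0 ≤ ∫ v, ⟪v, u x⟫ ^ 2 ∂μv := fun x => integral_nonneg fun v => sq_nonneg _
  refine mul_pos (by norm_num) (lt_of_le_of_ne (integral_nonneg hnn) fun h0 => hne ?_)
  have hint : Integrable (fun x => ∫ v, ⟪v, u x⟫ ^ 2 ∂μv) μ := hprod.integral_prod_left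
  have hae := (integral_eq_zero_iff_of_nonneg hnn hint).1 h0.symm
  have hae' : ∀ᵐ x ∂μ, u x = 0 := by
    filter_upwards [hae] with x hx
    by_contra hc
    exact (hv_posdef _ hc).ne' hx
  rw [hμ, ae_withDensity_iff (by have := hp.continuous; fun_prop)] at hae'
  have hae2 : u =ᵐ[volume] fun _ => 0 := by
    filter_upwards [hae'] with x hx
    exact hx (by simpa using hpos x)
  have hz := (Continuous.ae_eq_iff_eq volume huc continuous_const).1 hae2
  exact eq_of_score_eq hp hpos hq hqpos hpi hqi fun x => sub_eq_zero.1 (congrFun hz x)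

lemma ssmF_lip {D K : ℕ} (pm : EuclideanSpace ℝ (Fin K) → EuclideanSpace ℝ (Fin D) → ℝ)
    (θ₁ θ₂ : EuclideanSpace ℝ (Fin K)) (x v : EuclideanSpace ℝ (Fin D)) (l1 l2 : ℝ)
    (h1 : Real.sqrt (∑ i, ∑ j, ((fderiv ℝ (score (pm θ₁)) x (EuclideanSpace.single j 1)) i
          - (fderiv ℝ (score (pm θ₂)) x (EuclideanSpace.single j 1)) i) ^ 2)
        ≤ l1 * ‖θ₁ - θ₂‖)
    (h2 : Real.sqrt (∑ i, ∑ j, (score (pm θ₁) x i * score (pm θ₁) x j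
          - score (pm θ₂) x i * score (pm θ₂) x j) ^ 2)
        ≤ l2 * ‖θ₁ - θ₂‖) :
    |⟪v, fderiv ℝ (score (pm θ₁)) x v⟫ - ⟪v, fderiv ℝ (score (pm θ₂)) x v⟫|
        ≤ |l1| * ‖θ₁ - θ₂‖ * ‖v‖ ^ 2 ∧
    |ssmF pm θ₁ x v - ssmF pm θ₂ x v| ≤ (|l1| + |l2|) * ‖v‖ ^ 2 * ‖θ₁ - θ₂‖ := by
  have a1 : |⟪v, fderiv ℝ (score (pm θ₁)) x v⟫ - ⟪v, fderiv ℝ (score (pm θ₂)) x v⟫|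
        ≤ |l1| * ‖θ₁ - θ₂‖ * ‖v‖ ^ 2 := by
    rw [inner_clm, inner_clm]
    simp only [← Finset.sum_sub_distrib, ← sub_mul]
    refine (quad_bound _ v).trans ?_
    have := le_abs_self l1
    gcongr
    exact h1.trans (by gcongr)
  have a2 : |⟪v, score (pm θ₁) x⟫ ^ 2 - ⟪v, score (pm θ₂) x⟫ ^ 2|
        ≤ |l2| * ‖θ₁ - θ₂‖ * ‖v‖ ^ 2 := by
    rw [inner_sq, inner_sq]
    simp only [← Finset.sum_sub_distrib, ← sub_mul]
    refine (quad_bound _ v).trans ?_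
    have := le_abs_self l2
    gcongr
    exact h2.trans (by gcongr)
  refine ⟨a1, ?_⟩
  unfold ssmF
  have := abs_le.1 a1
  have := abs_le.1 a2
  rw [abs_le]
  constructor <;> linarith

lemma memLp_of_sq {D : ℕ} {pd : EuclideanSpace ℝ (Fin D) → ℝ} (hp : Continuous pd)
    (hpos : ∀ x, 0 < pd x) (L : EuclideanSpace ℝ (Fin D) → ℝ)
    (h : Integrable (fun x => pd x * L x ^ 2)) :
    MemLp (fun x => |L x|) 2 (volume.withDensity (fun x => ENNReal.ofReal (pd x))) := by
  rw [← wd_integrable hp hpos (fun x => L x ^ 2)] at h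
  have hm : AEStronglyMeasurable (fun x => |L x|)
      (volume.withDensity (fun x => ENNReal.ofReal (pd x))) := by
    have := Real.continuous_sqrt.comp_aestronglyMeasurable h.1
    simpa [Function.comp_def, Real.sqrt_sq_eq_abs] using this
  rw [memLp_two_iff_integrable_sq hm]
  simpa using h

/-- Abstract consistency argument: `Y θ` are square-integrable, Lipschitz in `θ` with a
square-integrable constant `B`, and have positive mean away from `θ*`. -/
lemma abstract_consistency {Ω X : Type*} [MeasurableSpace Ω] [PseudoMetricSpace X]
    (P : Measure Ω) [IsProbabilityMeasure P] (C : Set X) (hC : IsCompact C)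
    (Y : X → Ω → ℝ) (B : Ω → ℝ) (hB : MemLp B 2 P) (hB0 : ∀ z, 0 ≤ B z)
    (hY : ∀ θ ∈ C, MemLp (Y θ) 2 P)
    (hlip : ∀ θ₁ ∈ C, ∀ θ₂ ∈ C, ∀ z, |Y θ₁ z - Y θ₂ z| ≤ B z * dist θ₁ θ₂)
    (hpos : ∀ θ ∈ C, 0 < ∫ z, Y θ z ∂P) :
    Tendsto (fun N : ℕ => (Measure.pi fun _ : Fin N => P)
      {ω | ∃ θ ∈ C, ∑ i, Y θ (ω i) ≤ 0}) atTop (nhds 0) := by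
  classical
  set c : ℝ := ∫ z, B z ∂P with hc
  have hc0 : 0 ≤ c := integral_nonneg hB0
  have hc1 : 0 < c + 1 := by linarith
  set h : X → ℝ := fun θ => ∫ z, Y θ z ∂P with hh
  obtain ⟨t, htC, hcov⟩ := hC.elim_nhds_subcover (fun θ => if θ ∈ C then
      Metric.ball θ (h θ / 3 / (c + 1)) else Set.univ) (by
    intro θ hθ
    simp only [hθ, if_true]
    exact Metric.ball_mem_nhds _ (by have := hpos θ hθ; positivity))
  have hlim : Tendsto (fun N : ℕ => (∑ θ ∈ t, (Measure.pi fun _ : Fin N => P)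
        {ω | N * (h θ / 3) ≤ |∑ i, Y θ (ω i) - N * h θ|})
      + (Measure.pi fun _ : Fin N => P) {ω | N * 1 ≤ |∑ i, B (ω i) - N * c|}) atTop (nhds 0) := by
    have h1 := tendsto_finsetSum t (fun θ hθ => weak_lln P (Y θ) (hY θ (htC θ hθ)) (h θ / 3)
      (by have := hpos θ (htC θ hθ); positivity))
    have h2 := weak_lln P B hB 1 one_pos
    simpa using h1.add h2
  refine tendsto_of_tendsto_of_tendsto_of_le_of_le' tendsto_const_nhds hlim
    (Eventually.of_forall fun _ => zero_le) ?_
  filter_upwards [eventually_gt_atTop 0] with N hN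
  have hN' : (0:ℝ) < N := by exact_mod_cast hN
  refine le_trans (measure_mono (t := (⋃ θ ∈ t, {ω : Fin N → Ω |
      N * (h θ / 3) ≤ |∑ i, Y θ (ω i) - N * h θ|}) ∪
      {ω | N * 1 ≤ |∑ i, B (ω i) - N * c|}) ?_) ((measure_union_le _ _).trans
      (add_le_add (measure_biUnion_finset_le _ _) le_rfl))
  rintro ω ⟨θ, hθ, hle⟩
  by_contra hcon
  simp only [Set.mem_union, Set.mem_iUnion, Set.mem_setOf_eq, not_or, not_exists, not_le] at hcon
  obtain ⟨hcY, hcB⟩ := hcon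
  obtain ⟨θ₀, hθ₀, hmem⟩ := Set.mem_iUnion₂.1 (hcov hθ)
  have hθ₀C := htC θ₀ hθ₀
  simp only [hθ₀C, if_true, Metric.mem_ball] at hmem
  have i1 := (abs_lt.1 (hcY θ₀ hθ₀)).1
  have i2 := (abs_lt.1 hcB).2
  have i3 : ∑ i, Y θ₀ (ω i) - ∑ i, Y θ (ω i) ≤ (∑ i, B (ω i)) * dist θ θ₀ := by
    rw [← Finset.sum_sub_distrib, Finset.sum_mul]
    refine Finset.sum_le_sum fun i _ => ?_
    have := hlip θ hθ θ₀ hθ₀C (ω i)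
    linarith [(abs_le.1 this).1]
  have i4 : (∑ i, B (ω i)) * dist θ θ₀ ≤ (N * (c + 1)) * (h θ₀ / 3 / (c + 1)) := by
    have : ∑ i, B (ω i) ≤ N * (c + 1) := by linarith
    exact mul_le_mul this hmem.le dist_nonneg (by positivity)
  have i5 : (N * (c + 1)) * (h θ₀ / 3 / (c + 1)) = N * (h θ₀ / 3) := by field_simp
  have i6 : 0 < N * h θ₀ := mul_pos hN' (hpos θ₀ hθ₀C)
  linarith

/-- **Theorem 2 of the paper (consistency of sliced score matching).** Under the
regularity, projection, boundary, compactness, identifiability, positivity and Lipschitz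
assumptions, for every fixed `M ∈ ℕ⁺` any sequence of minimizers
`θ̂_{N,M} ∈ argmin_{θ∈Θ} Ĵ(θ; x_1^N, v_11^{NM})` converges in probability to `θ*`. -/
theorem ssm_estimator_consistency
    (D K M : ℕ) (hD : 1 ≤ D) (hM : 1 ≤ M)
    (Θ : Set (EuclideanSpace ℝ (Fin K)))
    (pd : EuclideanSpace ℝ (Fin D) → ℝ)
    (pm : EuclideanSpace ℝ (Fin K) → EuclideanSpace ℝ (Fin D) → ℝ)
    (θstar : EuclideanSpace ℝ (Fin K)) (hθstar : θstar ∈ Θ)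
    (μd μv : Measure (EuclideanSpace ℝ (Fin D)))
    [IsProbabilityMeasure μd] [IsProbabilityMeasure μv]
    -- data density: positive, differentiable; μd is the data distribution
    (hpd_pos : ∀ x, 0 < pd x) (hpd_diff : Differentiable ℝ pd)
    (hμd : μd = volume.withDensity (fun x => ENNReal.ofReal (pd x)))
    -- model densities: positive, twice continuously differentiable, integrate to one
    (hpm_pos : ∀ θ x, 0 < pm θ x) (hpm_smooth : ∀ θ, ContDiff ℝ 2 (pm θ))
    (hpm_prob : ∀ θ, ∫ x, pm θ x = 1)
    -- regularity of scores: E_{p_d}[‖s_m(x;θ)‖²] < ∞ and E_{p_d}[‖s_d(x)‖²] < ∞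
    (hreg_m : ∀ θ, Integrable (fun x => pd x * ‖score (pm θ) x‖ ^ 2))
    (hreg_d : Integrable (fun x => pd x * ‖score pd x‖ ^ 2))
    -- projection vectors: E[‖v‖²] < ∞, E[v vᵀ] ≻ 0 and E[‖v vᵀ‖_F²] < ∞
    (hv_mom : Integrable (fun v => ‖v‖ ^ 2) μv)
    (hv_posdef : ∀ w : EuclideanSpace ℝ (Fin D), w ≠ 0 → 0 < ∫ v, ⟪v, w⟫ ^ 2 ∂μv)
    (hv4 : Integrable (fun v => ∑ i, ∑ j, (v i * v j) ^ 2) μv)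
    -- boundary condition: s_m(x;θ) p_d(x) → 0 as ‖x‖ → ∞
    (hbound : ∀ θ, Tendsto (fun x => pd x • score (pm θ) x)
      (Bornology.cobounded (EuclideanSpace ℝ (Fin D))) (nhds 0))
    -- compactness of the parameter space
    (hΘ : IsCompact Θ)
    -- well-specification and identifiability
    (hws : pd = pm θstar)
    (hident : ∀ θ ∈ Θ, pm θ = pm θstar → θ = θstar)
    -- Lipschitz assumptions with square-integrable constants
    (L1 L2 : EuclideanSpace ℝ (Fin D) → ℝ)
    (hL1 : ∀ θ₁ ∈ Θ, ∀ θ₂ ∈ Θ, ∀ x,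
      Real.sqrt (∑ i, ∑ j, ((fderiv ℝ (score (pm θ₁)) x (EuclideanSpace.single j 1)) i
          - (fderiv ℝ (score (pm θ₂)) x (EuclideanSpace.single j 1)) i) ^ 2)
        ≤ L1 x * ‖θ₁ - θ₂‖)
    (hL2 : ∀ θ₁ ∈ Θ, ∀ θ₂ ∈ Θ, ∀ x,
      Real.sqrt (∑ i, ∑ j, (score (pm θ₁) x i * score (pm θ₁) x j
          - score (pm θ₂) x i * score (pm θ₂) x j) ^ 2)
        ≤ L2 x * ‖θ₁ - θ₂‖)
    (hL1int : Integrable (fun x => pd x * L1 x ^ 2))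
    (hL2int : Integrable (fun x => pd x * L2 x ^ 2))
    -- a sequence of measurable estimators attaining the minimum of the empirical objective
    (T : (N : ℕ) → ((Fin N → EuclideanSpace ℝ (Fin D)) × (Fin N × Fin M → EuclideanSpace ℝ (Fin D)))
      → EuclideanSpace ℝ (Fin K))
    (hT_meas : ∀ N, Measurable (T N))
    (hT_argmin : ∀ N ω, T N ω ∈ Θ ∧ ∀ θ ∈ Θ,
      (1 / ((N : ℝ) * (M : ℝ))) * ∑ i : Fin N, ∑ j : Fin M, ssmF pm (T N ω) (ω.1 i) (ω.2 (i, j))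
        ≤ (1 / ((N : ℝ) * (M : ℝ))) * ∑ i : Fin N, ∑ j : Fin M, ssmF pm θ (ω.1 i) (ω.2 (i, j))) :
    -- conclusion: θ̂_{N,M} → θ* in probability as N → ∞
    ∀ ε > 0, Tendsto (fun N : ℕ =>
      ((Measure.pi fun _ : Fin N => μd).prod (Measure.pi fun _ : Fin N × Fin M => μv))
        {ω | ε ≤ dist (T N ω) θstar}) atTop (nhds 0) := by
  intro ε hε
  subst hws
  have hpc : Continuous (pm θstar) := (hpm_smooth θstar).continuous
  have hp0 := hpm_pos θstar
  have hsc : ∀ θ, Continuous (score (pm θ)) := fun θ =>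
    (score_contDiff (hpm_smooth θ) (hpm_pos θ)).continuous
  have hfc : ∀ θ, Continuous (fderiv ℝ (score (pm θ))) := fun θ =>
    (score_contDiff (hpm_smooth θ) (hpm_pos θ)).continuous_fderiv (by norm_num)
  have hFc : ∀ θ, Continuous (fun z : EuclideanSpace ℝ (Fin D) × EuclideanSpace ℝ (Fin D) =>
      ssmF pm θ z.1 z.2) := by
    intro θ
    have h1 := hsc θ
    have h2 := hfc θ
    unfold ssmF
    fun_prop
  have hsL : ∀ θ, MemLp (score (pm θ)) 2 μd := by
    intro θ
    rw [memLp_two_iff_integrable_sq_norm (hsc θ).aestronglyMeasurable, hμd,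
      wd_integrable hpc hp0]
    exact hreg_m θ
  have hA1 : MemLp (fun x => |L1 x|) 2 μd := by
    rw [hμd]; exact memLp_of_sq hpc hp0 L1 hL1int
  have hA2 : MemLp (fun x => |L2 x|) 2 μd := by
    rw [hμd]; exact memLp_of_sq hpc hp0 L2 hL2int
  have hA : MemLp (fun x => |L1 x| + |L2 x|) 2 μd := hA1.add hA2
  have hv2 : MemLp (fun v : EuclideanSpace ℝ (Fin D) => ‖v‖ ^ 2) 2 μv := by
    rw [memLp_two_iff_integrable_sq (by fun_prop)]
    refine hv4.congr (Eventually.of_forall fun v => ?_)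
    simp only
    rw [EuclideanSpace.real_norm_sq_eq, sq (∑ i, v i ^ 2), Finset.sum_mul_sum]
    simp only [mul_pow]
  have mul_memLp : ∀ {β : Type} [MeasurableSpace β] (ν : Measure β) [IsProbabilityMeasure ν]
      (b : β → ℝ), MemLp b 2 ν →
      MemLp (fun z : EuclideanSpace ℝ (Fin D) × β => (|L1 z.1| + |L2 z.1|) * b z.2) 2
        (μd.prod ν) := by
    intro β _ ν _ b hb
    have hm : AEStronglyMeasurable
        (fun z : EuclideanSpace ℝ (Fin D) × β => (|L1 z.1| + |L2 z.1|) * b z.2) (μd.prod ν) :=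
      hA.1.comp_fst.mul hb.1.comp_snd
    rw [memLp_two_iff_integrable_sq hm]
    simp only [mul_pow]
    exact hA.integrable_sq.mul_prod hb.integrable_sq
  have hlipF : ∀ θ₁ ∈ Θ, ∀ θ₂ ∈ Θ, ∀ x v, |ssmF pm θ₁ x v - ssmF pm θ₂ x v|
      ≤ (|L1 x| + |L2 x|) * ‖v‖ ^ 2 * dist θ₁ θ₂ := fun θ₁ h₁ θ₂ h₂ x v => by
    rw [dist_eq_norm]
    exact (ssmF_lip pm θ₁ θ₂ x v (L1 x) (L2 x) (hL1 θ₁ h₁ θ₂ h₂ x) (hL2 θ₁ h₁ θ₂ h₂ x)).2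
  set Pv : Measure (Fin M → EuclideanSpace ℝ (Fin D)) := Measure.pi fun _ : Fin M => μv with hPv
  set P := μd.prod Pv with hP
  set B : EuclideanSpace ℝ (Fin D) × (Fin M → EuclideanSpace ℝ (Fin D)) → ℝ :=
    fun z => (|L1 z.1| + |L2 z.1|) * ∑ j, ‖z.2 j‖ ^ 2 with hBdef
  have hB : MemLp B 2 P := by
    refine mul_memLp Pv (fun w => ∑ j, ‖w j‖ ^ 2) ?_
    exact memLp_finsetSum _ fun j _ =>
      hv2.comp_measurePreserving (measurePreserving_eval (fun _ : Fin M => μv) j)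
  set Y : EuclideanSpace ℝ (Fin K) →
      EuclideanSpace ℝ (Fin D) × (Fin M → EuclideanSpace ℝ (Fin D)) → ℝ :=
    fun θ z => ∑ j, (ssmF pm θ z.1 (z.2 j) - ssmF pm θstar z.1 (z.2 j)) with hYdef
  have hlip : ∀ θ₁ ∈ Θ, ∀ θ₂ ∈ Θ, ∀ z, |Y θ₁ z - Y θ₂ z| ≤ B z * dist θ₁ θ₂ := by
    intro θ₁ h₁ θ₂ h₂ z
    simp only [hYdef, hBdef, ← Finset.sum_sub_distrib, sub_sub_sub_cancel_right]
    refine (Finset.abs_sum_le_sum_abs _ _).trans ?_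
    rw [Finset.mul_sum, Finset.sum_mul]
    exact Finset.sum_le_sum fun j _ => hlipF θ₁ h₁ θ₂ h₂ _ _
  have hYc : ∀ θ, Continuous (Y θ) := by
    intro θ
    refine continuous_finsetSum _ fun j _ => ?_
    have hg : Continuous fun z : EuclideanSpace ℝ (Fin D) × (Fin M → EuclideanSpace ℝ (Fin D)) =>
      (z.1, z.2 j) := by fun_prop
    exact ((hFc θ).comp hg).sub ((hFc θstar).comp hg)
  have hB0 : ∀ z, 0 ≤ B z := fun z => by positivity
  have hY : ∀ θ ∈ Θ, MemLp (Y θ) 2 P := by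
    intro θ hθ
    refine (hB.mul_const (dist θ θstar)).mono (hYc θ).aestronglyMeasurable
      (Eventually.of_forall fun z => ?_)
    have := hlip θ hθ θstar hθstar z
    have h0 : Y θstar z = 0 := by simp [hYdef]
    rw [h0, sub_zero] at this
    rw [Real.norm_eq_abs]
    exact this.trans (le_abs_self _)
  have hFint : ∀ θ ∈ Θ, Integrable (fun z : EuclideanSpace ℝ (Fin D) × EuclideanSpace ℝ (Fin D) =>
      ssmF pm θ z.1 z.2 - ssmF pm θstar z.1 z.2) (μd.prod μv) := by
    intro θ hθ
    refine (((mul_memLp μv _ hv2).integrable (by norm_num)).mul_const (dist θ θstar)).mono'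
      ((hFc θ).sub (hFc θstar)).aestronglyMeasurable (Eventually.of_forall fun z => ?_)
    exact hlipF θ hθ θstar hθstar z.1 z.2
  have hposF : ∀ θ ∈ Θ, θ ≠ θstar → 0 < ∫ z : EuclideanSpace ℝ (Fin D) × EuclideanSpace ℝ (Fin D),
      (ssmF pm θ z.1 z.2 - ssmF pm θstar z.1 z.2) ∂(μd.prod μv) := by
    intro θ hθ hne
    refine population_pos (hpm_smooth θstar) hp0 (hpm_smooth θ) (hpm_pos θ) (hpm_prob θstar)
      (hpm_prob θ) (fun h => hne (hident θ hθ h)) μd μv hμd (hsL θ) (hsL θstar) hv_mom hv_posdef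
      (fun v => ?_) (hFint θ hθ)
    have h1 := hfc θ
    have h2 := hfc θstar
    refine (((hA1.integrable (by norm_num)).mul_const ‖θ - θstar‖).mul_const (‖v‖ ^ 2)).mono'
      (Continuous.aestronglyMeasurable (by fun_prop)) (Eventually.of_forall fun x => ?_)
    exact (ssmF_lip pm θ θstar x v (L1 x) (L2 x) (hL1 θ hθ θstar hθstar x)
      (hL2 θ hθ θstar hθstar x)).1
  have hposY : ∀ θ ∈ Θ, θ ≠ θstar → 0 < ∫ z, Y θ z ∂P := by
    intro θ hθ hne
    have hmp : ∀ j : Fin M, MeasurePreserving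
        (fun z : EuclideanSpace ℝ (Fin D) × (Fin M → EuclideanSpace ℝ (Fin D)) => (z.1, z.2 j))
        P (μd.prod μv) := fun j =>
      (MeasurePreserving.id μd).prod (measurePreserving_eval (fun _ : Fin M => μv) j)
    have hj : ∀ j : Fin M, 0 < ∫ z, (ssmF pm θ z.1 (z.2 j) - ssmF pm θstar z.1 (z.2 j)) ∂P := by
      intro j
      have := integral_map (μ := P) (hmp j).measurable.aemeasurable
        (f := fun z => ssmF pm θ z.1 z.2 - ssmF pm θstar z.1 z.2)
        ((hFc θ).sub (hFc θstar)).aestronglyMeasurable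
      rw [(hmp j).map_eq] at this
      rw [← this]
      exact hposF θ hθ hne
    simp only [hYdef]
    have hji : ∀ j : Fin M, Integrable
        (fun z : EuclideanSpace ℝ (Fin D) × (Fin M → EuclideanSpace ℝ (Fin D)) =>
          ssmF pm θ z.1 (z.2 j) - ssmF pm θstar z.1 (z.2 j)) P :=
      fun j => (hmp j).integrable_comp_of_integrable (hFint θ hθ)
    rw [integral_finsetSum _ fun j _ => hji j]
    haveI : Nonempty (Fin M) := ⟨⟨0, hM⟩⟩
    exact Finset.sum_pos (fun j _ => hj j) Finset.univ_nonempty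
  set C : Set (EuclideanSpace ℝ (Fin K)) := Θ ∩ {θ | ε ≤ dist θ θstar} with hCdef
  have hC : IsCompact C := hΘ.inter_right (isClosed_le continuous_const (by fun_prop))
  have hne : ∀ θ ∈ C, θ ≠ θstar := by
    rintro θ ⟨-, h⟩ rfl
    have h' : ε ≤ dist θ θ := h
    rw [dist_self] at h'
    linarith
  have hmain := abstract_consistency P C hC Y B hB hB0 (fun θ hθ => hY θ hθ.1)
    (fun θ₁ h₁ θ₂ h₂ => hlip θ₁ h₁.1 θ₂ h₂.1) (fun θ hθ => hposY θ hθ.1 (hne θ hθ))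
  refine tendsto_of_tendsto_of_tendsto_of_le_of_le' tendsto_const_nhds hmain
    (Eventually.of_forall fun _ => zero_le) ?_
  filter_upwards [eventually_gt_atTop 0] with N hN
  have hN' : (0:ℝ) < N := by exact_mod_cast hN
  have hM' : (0:ℝ) < M := by exact_mod_cast hM
  have hmp := reshape_mp μd μv N M
  rw [← hmp.map_eq]
  refine le_trans (measure_mono ?_) (Measure.le_map_apply hmp.measurable.aemeasurable _)
  intro ω hω
  refine ⟨T N ω, ⟨(hT_argmin N ω).1, hω⟩, ?_⟩
  have := le_of_mul_le_mul_left ((hT_argmin N ω).2 θstar hθstar) (by positivity)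
  simp only [hYdef, Finset.sum_sub_distrib]
  linarith
end
end

section
/- Under the assumptions below, the covariance matrix of the gradient of the averaged sliced objective at the true parameter satisfies Var_{p_d, p_v}[∇_θ f(θ*; x, v_1^M)] = Σ_{i,j,p,q} [ (1 − 1/M) Σ_{ij} Σ_{pq} + (1/M) 𝔖_{ijpq} ] 𝔙_{ijpq}. (Lemma B.6 of the paper, general case.) -/
open MeasureTheory

noncomputable section

/-- `∂ᵢ log p_m(x;θ)`, the `i`-th partial derivative in `x` of the log-density. -/
def dLx {D K : ℕ} (pm : EuclideanSpace ℝ (Fin K) → (Fin D → ℝ) → ℝ)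
    (θ : EuclideanSpace ℝ (Fin K)) (x : Fin D → ℝ) (i : Fin D) : ℝ :=
  fderiv ℝ (fun y => Real.log (pm θ y)) x (Pi.single i 1)

/-- `∂ᵢ∂ⱼ log p_m(x;θ)`, a second partial derivative in `x` of the log-density. -/
def d2Lx {D K : ℕ} (pm : EuclideanSpace ℝ (Fin K) → (Fin D → ℝ) → ℝ)
    (θ : EuclideanSpace ℝ (Fin K)) (x : Fin D → ℝ) (i j : Fin D) : ℝ :=
  fderiv ℝ (fun y => dLx pm θ y j) x (Pi.single i 1)

/-- `u_{ij}(x) = ∇_θ ∂ᵢ∂ⱼ l_m + ½ ∇_θ(∂ᵢ l_m ∂ⱼ l_m)` evaluated at `θ = θ*`. -/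
def uVec {D K : ℕ} (pm : EuclideanSpace ℝ (Fin K) → (Fin D → ℝ) → ℝ)
    (θstar : EuclideanSpace ℝ (Fin K)) (i j : Fin D) (x : Fin D → ℝ) :
    EuclideanSpace ℝ (Fin K) :=
  gradient (fun θ => d2Lx pm θ x i j) θstar
    + (1/2 : ℝ) • gradient (fun θ => dLx pm θ x i * dLx pm θ x j) θstar

/-- `f(θ; x, v_1^M) = (1/M) Σⱼ [vⱼᵀ ∇ₓ s_m(x;θ) vⱼ + ½ (vⱼᵀ s_m(x;θ))²]`. -/
def avgF {D K M : ℕ} (pm : EuclideanSpace ℝ (Fin K) → (Fin D → ℝ) → ℝ)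
    (θ : EuclideanSpace ℝ (Fin K)) (x : Fin D → ℝ) (vs : Fin M → Fin D → ℝ) : ℝ :=
  (1 / (M : ℝ)) * ∑ k : Fin M,
    ((∑ i, ∑ j, vs k i * vs k j * d2Lx pm θ x i j)
      + (1/2) * (∑ i, vs k i * dLx pm θ x i) ^ 2)

/-- `∇_θ f(θ*; x, v_1^M)`. -/
def gradF {D K M : ℕ} (pm : EuclideanSpace ℝ (Fin K) → (Fin D → ℝ) → ℝ)
    (θstar : EuclideanSpace ℝ (Fin K)) (x : Fin D → ℝ) (vs : Fin M → Fin D → ℝ) :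
    EuclideanSpace ℝ (Fin K) :=
  gradient (fun θ => avgF pm θ x vs) θstar

theorem aux_contDiff_dLx {D K : ℕ} (pm : EuclideanSpace ℝ (Fin K) → (Fin D → ℝ) → ℝ)
    (hsmooth : ContDiff ℝ (⊤ : ℕ∞)
      (fun p : EuclideanSpace ℝ (Fin K) × (Fin D → ℝ) => Real.log (pm p.1 p.2))) (i : Fin D) :
    ContDiff ℝ (⊤ : ℕ∞)
      (fun p : EuclideanSpace ℝ (Fin K) × (Fin D → ℝ) => dLx pm p.1 p.2 i) := by
  unfold dLx
  have h : ContDiff ℝ (⊤ : ℕ∞) (fun p : EuclideanSpace ℝ (Fin K) × (Fin D → ℝ) =>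
      fderiv ℝ ((fun (q : EuclideanSpace ℝ (Fin K) × (Fin D → ℝ)) y =>
        Real.log (pm q.1 y)) p) p.2) := by
    refine ContDiff.fderiv (m := (⊤ : ℕ∞)) (n := (⊤ : ℕ∞)) ?_ contDiff_snd (by simp)
    exact hsmooth.comp ((contDiff_fst.comp contDiff_fst).prodMk contDiff_snd)
  exact h.clm_apply contDiff_const

theorem aux_contDiff_d2Lx {D K : ℕ} (pm : EuclideanSpace ℝ (Fin K) → (Fin D → ℝ) → ℝ)
    (hsmooth : ContDiff ℝ (⊤ : ℕ∞)
      (fun p : EuclideanSpace ℝ (Fin K) × (Fin D → ℝ) => Real.log (pm p.1 p.2))) (i j : Fin D) :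
    ContDiff ℝ (⊤ : ℕ∞)
      (fun p : EuclideanSpace ℝ (Fin K) × (Fin D → ℝ) => d2Lx pm p.1 p.2 i j) := by
  unfold d2Lx
  have h : ContDiff ℝ (⊤ : ℕ∞) (fun p : EuclideanSpace ℝ (Fin K) × (Fin D → ℝ) =>
      fderiv ℝ ((fun (q : EuclideanSpace ℝ (Fin K) × (Fin D → ℝ)) y =>
        dLx pm q.1 y j) p) p.2) := by
    refine ContDiff.fderiv (m := (⊤ : ℕ∞)) (n := (⊤ : ℕ∞)) ?_ contDiff_snd (by simp)
    exact (aux_contDiff_dLx pm hsmooth j).comp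
      ((contDiff_fst.comp contDiff_fst).prodMk contDiff_snd)
  exact h.clm_apply contDiff_const

theorem aux_gradF {D K M : ℕ} (pm : EuclideanSpace ℝ (Fin K) → (Fin D → ℝ) → ℝ)
    (θstar : EuclideanSpace ℝ (Fin K))
    (hsmooth : ContDiff ℝ (⊤ : ℕ∞)
      (fun p : EuclideanSpace ℝ (Fin K) × (Fin D → ℝ) => Real.log (pm p.1 p.2)))
    (x : Fin D → ℝ) (vs : Fin M → Fin D → ℝ) :
    gradF pm θstar x vs
      = (1 / (M : ℝ)) • ∑ k, ∑ i, ∑ j, (vs k i * vs k j) • uVec pm θstar i j x := by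
  have hpair : ContDiff ℝ (⊤ : ℕ∞)
      (fun θ : EuclideanSpace ℝ (Fin K) => (θ, x)) := contDiff_id.prodMk contDiff_const
  have h1 : ∀ i, DifferentiableAt ℝ (fun θ => dLx pm θ x i) θstar := fun i =>
    (((aux_contDiff_dLx pm hsmooth i).comp hpair).differentiable (by simp)).differentiableAt
  have h2 : ∀ i j, DifferentiableAt ℝ (fun θ => d2Lx pm θ x i j) θstar := fun i j =>
    (((aux_contDiff_d2Lx pm hsmooth i j).comp hpair).differentiable (by simp)).differentiableAt
  have hu : ∀ i j, HasFDerivAt (fun θ => d2Lx pm θ x i j + (1/2) * (dLx pm θ x i * dLx pm θ x j))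
      (InnerProductSpace.toDual ℝ (EuclideanSpace ℝ (Fin K)) (uVec pm θstar i j x)) θstar := by
    intro i j
    have ha := (h2 i j).hasGradientAt.hasFDerivAt
    have hb := ((h1 i).mul (h1 j)).hasGradientAt.hasFDerivAt
    have := ha.add (hb.const_mul (1/2 : ℝ))
    unfold uVec
    rw [map_add, map_smul]
    exact this
  have heq : (fun θ => avgF pm θ x vs) = fun θ => (1 / (M : ℝ)) * ∑ k, ∑ i, ∑ j,
      (vs k i * vs k j) * (d2Lx pm θ x i j + (1/2) * (dLx pm θ x i * dLx pm θ x j)) := by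
    funext θ
    unfold avgF
    congr 1
    refine Finset.sum_congr rfl fun k _ => ?_
    rw [sq, Finset.sum_mul_sum, Finset.mul_sum, ← Finset.sum_add_distrib]
    refine Finset.sum_congr rfl fun i _ => ?_
    rw [Finset.mul_sum, ← Finset.sum_add_distrib]
    refine Finset.sum_congr rfl fun j _ => ?_
    ring
  unfold gradF
  rw [heq]
  apply HasGradientAt.gradient
  rw [hasGradientAt_iff_hasFDerivAt, map_smul]
  simp only [map_sum]
  refine HasFDerivAt.const_mul ?_ _
  refine HasFDerivAt.fun_sum fun k _ => HasFDerivAt.fun_sum fun i _ =>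
    HasFDerivAt.fun_sum fun j _ => ?_
  rw [map_smul]
  exact (hu i j).const_mul _

theorem aux_pair_memLp {D : ℕ} (μv : Measure (Fin D → ℝ)) [IsProbabilityMeasure μv]
    (hv4 : Integrable (fun v => ∑ i, ∑ j, (v i * v j) ^ 2) μv) (i j : Fin D) :
    MemLp (fun v : Fin D → ℝ => v i * v j) 2 μv := by
  have hm : Measurable (fun v : Fin D → ℝ => v i * v j) := by fun_prop
  rw [memLp_two_iff_integrable_sq hm.aestronglyMeasurable]
  refine hv4.mono' (hm.pow_const 2).aestronglyMeasurable (Filter.Eventually.of_forall fun v => ?_)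
  rw [Real.norm_of_nonneg (sq_nonneg _)]
  refine le_trans ?_ (Finset.single_le_sum (f := fun i => ∑ j, (v i * v j) ^ 2)
    (fun i _ => Finset.sum_nonneg fun j _ => sq_nonneg _) (Finset.mem_univ i))
  exact Finset.single_le_sum (f := fun j => (v i * v j) ^ 2)
    (fun j _ => sq_nonneg _) (Finset.mem_univ j)

/-- integrability and value of the mixed moments of the projections. -/
theorem aux_moment {D M : ℕ} (μv : Measure (Fin D → ℝ)) [IsProbabilityMeasure μv]
    (hv4 : Integrable (fun v => ∑ i, ∑ j, (v i * v j) ^ 2) μv) (i j p q : Fin D)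
    (k l : Fin M) :
    Integrable (fun vs : Fin M → Fin D → ℝ => (vs k i * vs k j) * (vs l p * vs l q))
      (Measure.pi fun _ : Fin M => μv) ∧
    ∫ vs : Fin M → Fin D → ℝ, (vs k i * vs k j) * (vs l p * vs l q)
      ∂(Measure.pi fun _ : Fin M => μv)
    = if k = l then ∫ v, v i * v j * v p * v q ∂μv
      else (∫ v, v i * v j ∂μv) * (∫ v, v p * v q ∂μv) := by
  have hij := aux_pair_memLp μv hv4 i j
  have hpq := aux_pair_memLp μv hv4 p q
  have mp : ∀ k : Fin M, MeasurePreserving (fun vs : Fin M → Fin D → ℝ => vs k)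
      (Measure.pi fun _ : Fin M => μv) μv := fun k =>
    measurePreserving_eval (fun _ : Fin M => μv) k
  split_ifs with hkl
  · subst hkl
    have hint : Integrable (fun v : Fin D → ℝ => (v i * v j) * (v p * v q)) μv :=
      hij.integrable_mul hpq
    constructor
    · exact (mp k).integrable_comp_of_integrable hint
    · have := integral_map (mp k).measurable.aemeasurable
        (f := fun v : Fin D → ℝ => (v i * v j) * (v p * v q))
        (by rw [(mp k).map_eq]; exact hint.aestronglyMeasurable)
      rw [← this, (mp k).map_eq]
      simp only [mul_assoc]
  · have hind : ProbabilityTheory.iIndepFun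
        (fun (k : Fin M) (vs : Fin M → Fin D → ℝ) => vs k) (Measure.pi fun _ : Fin M => μv) :=
      ProbabilityTheory.iIndepFun_pi (X := fun _ v => v) (fun _ => aemeasurable_id)
    have hI := (hind.indepFun hkl).comp
      (φ := fun v : Fin D → ℝ => v i * v j) (ψ := fun v : Fin D → ℝ => v p * v q)
      (by fun_prop) (by fun_prop)
    have i1 := (mp k).integrable_comp_of_integrable (hij.integrable (by norm_num))
    have i2 := (mp l).integrable_comp_of_integrable (hpq.integrable (by norm_num))
    constructor
    · exact hI.integrable_mul i1 i2
    · have h := hI.integral_mul_eq_mul_integral i1.aestronglyMeasurable i2.aestronglyMeasurable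
      refine h.trans ?_
      congr 1
      · have := integral_map (mp k).measurable.aemeasurable
          (f := fun v : Fin D → ℝ => (v i * v j))
          (by rw [(mp k).map_eq]; exact hij.aestronglyMeasurable)
        rw [(mp k).map_eq] at this
        exact this.symm
      · have := integral_map (mp l).measurable.aemeasurable
          (f := fun v : Fin D → ℝ => (v p * v q))
          (by rw [(mp l).map_eq]; exact hpq.aestronglyMeasurable)
        rw [(mp l).map_eq] at this
        exact this.symm

theorem aux_count (M : ℕ) (hM : 1 ≤ M) (S T : ℝ) :
    (1 / (M : ℝ)) * (1 / (M : ℝ)) * ∑ k : Fin M, ∑ l : Fin M, (if k = l then S else T)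
      = (1 - 1 / (M : ℝ)) * T + (1 / (M : ℝ)) * S := by
  have hM' : (M : ℝ) ≠ 0 := by positivity
  have h : ∀ k l : Fin M, (if k = l then S else T) = T + if k = l then S - T else 0 := by
    intro k l; split_ifs <;> ring
  simp only [h, Finset.sum_add_distrib, Finset.sum_ite_eq, Finset.mem_univ, if_true,
    Finset.sum_const, Finset.card_univ, Fintype.card_fin, nsmul_eq_mul]
  field_simp
  ring

/-- **Lemma B.6 of the paper (general case).** The covariance matrix of
`∇_θ f(θ*; x, v_1^M)` equals
`Σ_{i,j,p,q} [(1 − 1/M) Σ_{ij} Σ_{pq} + (1/M) 𝔖_{ijpq}] 𝔙_{ijpq}`. -/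
theorem variance_of_sliced_gradient
    (D K M : ℕ) (hD : 1 ≤ D) (hM : 1 ≤ M)
    (pd : (Fin D → ℝ) → ℝ)
    (pm : EuclideanSpace ℝ (Fin K) → (Fin D → ℝ) → ℝ)
    (θstar : EuclideanSpace ℝ (Fin K))
    (μd μv : Measure (Fin D → ℝ)) [IsProbabilityMeasure μd] [IsProbabilityMeasure μv]
    -- data density: positive, differentiable; μd is the data distribution
    (hpd_pos : ∀ x, 0 < pd x) (hpd_diff : Differentiable ℝ pd)
    (hμd : μd = volume.withDensity (fun x => ENNReal.ofReal (pd x)))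
    -- model densities: positive, with all relevant derivatives existing
    (hpm_pos : ∀ θ x, 0 < pm θ x)
    (hsmooth : ContDiff ℝ (⊤ : ℕ∞)
      (fun p : EuclideanSpace ℝ (Fin K) × (Fin D → ℝ) => Real.log (pm p.1 p.2)))
    -- well-specified: p_d = p_m(·; θ*)
    (hws : pd = pm θstar)
    -- moments of the projection distribution
    (hv2 : Integrable (fun v => ∑ i, (v i) ^ 2) μv)
    (hv4 : Integrable (fun v => ∑ i, ∑ j, (v i * v j) ^ 2) μv)
    -- all expectations below are finite
    (hg_int : ∀ a : Fin K,
      Integrable (fun z : (Fin D → ℝ) × (Fin M → Fin D → ℝ) => gradF pm θstar z.1 z.2 a)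
        (μd.prod (Measure.pi fun _ : Fin M => μv)))
    (hgg_int : ∀ a b : Fin K,
      Integrable (fun z : (Fin D → ℝ) × (Fin M → Fin D → ℝ) =>
          gradF pm θstar z.1 z.2 a * gradF pm θstar z.1 z.2 b)
        (μd.prod (Measure.pi fun _ : Fin M => μv)))
    (huu_int : ∀ (i j p q : Fin D) (a b : Fin K),
      Integrable (fun x => uVec pm θstar i j x a * uVec pm θstar p q x b) μd)
    -- the assumptions of Theorem 1 hold, so the gradient has zero mean at θ*
    (hmean : ∀ a : Fin K,
      ∫ z : (Fin D → ℝ) × (Fin M → Fin D → ℝ), gradF pm θstar z.1 z.2 a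
        ∂(μd.prod (Measure.pi fun _ : Fin M => μv)) = 0) :
    ∀ a b : Fin K,
      (∫ z : (Fin D → ℝ) × (Fin M → Fin D → ℝ),
          gradF pm θstar z.1 z.2 a * gradF pm θstar z.1 z.2 b
          ∂(μd.prod (Measure.pi fun _ : Fin M => μv)))
        - (∫ z : (Fin D → ℝ) × (Fin M → Fin D → ℝ), gradF pm θstar z.1 z.2 a
            ∂(μd.prod (Measure.pi fun _ : Fin M => μv)))
          * (∫ z : (Fin D → ℝ) × (Fin M → Fin D → ℝ), gradF pm θstar z.1 z.2 b
              ∂(μd.prod (Measure.pi fun _ : Fin M => μv)))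
      = ∑ i, ∑ j, ∑ p, ∑ q,
          ((1 - 1 / (M : ℝ)) * ((∫ v, v i * v j ∂μv) * (∫ v, v p * v q ∂μv))
            + (1 / (M : ℝ)) * ∫ v, v i * v j * v p * v q ∂μv)
          * ∫ x, uVec pm θstar i j x a * uVec pm θstar p q x b ∂μd := by
  intro a b
  rw [hmean a, zero_mul, sub_zero]
  have hcoord : ∀ (x : Fin D → ℝ) (vs : Fin M → Fin D → ℝ) (c : Fin K),
      gradF pm θstar x vs c
        = (1 / (M : ℝ)) * ∑ k, ∑ i, ∑ j, (vs k i * vs k j) * uVec pm θstar i j x c := by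
    intro x vs c
    rw [aux_gradF pm θstar hsmooth]
    simp
  have hprod : ∀ z : (Fin D → ℝ) × (Fin M → Fin D → ℝ),
      gradF pm θstar z.1 z.2 a * gradF pm θstar z.1 z.2 b
        = ∑ i, ∑ j, ∑ p, ∑ q, ∑ k, ∑ l, (1 / (M : ℝ)) * (1 / (M : ℝ)) *
          ((uVec pm θstar i j z.1 a * uVec pm θstar p q z.1 b) *
            ((z.2 k i * z.2 k j) * (z.2 l p * z.2 l q))) := by
    intro z
    have hswap : ∀ c : Fin K, (∑ k, ∑ i, ∑ j, (z.2 k i * z.2 k j) * uVec pm θstar i j z.1 c)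
        = ∑ i, ∑ j, ∑ k, (z.2 k i * z.2 k j) * uVec pm θstar i j z.1 c := by
      intro c
      rw [Finset.sum_comm]
      refine Finset.sum_congr rfl fun i _ => ?_
      rw [Finset.sum_comm]
    rw [hcoord, hcoord, hswap, hswap, mul_mul_mul_comm, Finset.sum_mul, Finset.mul_sum]
    refine Finset.sum_congr rfl fun i _ => ?_
    rw [Finset.sum_mul, Finset.mul_sum]
    refine Finset.sum_congr rfl fun j _ => ?_
    rw [Finset.mul_sum, Finset.mul_sum]
    refine Finset.sum_congr rfl fun p _ => ?_
    rw [Finset.mul_sum, Finset.mul_sum]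
    refine Finset.sum_congr rfl fun q _ => ?_
    rw [Finset.sum_mul_sum, Finset.mul_sum]
    refine Finset.sum_congr rfl fun k _ => ?_
    rw [Finset.mul_sum]
    refine Finset.sum_congr rfl fun l _ => ?_
    ring
  have hint : ∀ (i j p q : Fin D) (k l : Fin M),
      Integrable (fun z : (Fin D → ℝ) × (Fin M → Fin D → ℝ) =>
        (1 / (M : ℝ)) * (1 / (M : ℝ)) *
          ((uVec pm θstar i j z.1 a * uVec pm θstar p q z.1 b) *
            ((z.2 k i * z.2 k j) * (z.2 l p * z.2 l q))))
        (μd.prod (Measure.pi fun _ : Fin M => μv)) := fun i j p q k l =>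
    ((huu_int i j p q a b).mul_prod (aux_moment μv hv4 i j p q k l).1).const_mul _
  simp_rw [hprod]
  rw [integral_finsetSum _ fun i _ => integrable_finsetSum _ fun j _ =>
    integrable_finsetSum _ fun p _ => integrable_finsetSum _ fun q _ =>
    integrable_finsetSum _ fun k _ => integrable_finsetSum _ fun l _ => hint i j p q k l]
  refine Finset.sum_congr rfl fun i _ => ?_
  rw [integral_finsetSum _ fun j _ =>
    integrable_finsetSum _ fun p _ => integrable_finsetSum _ fun q _ =>
    integrable_finsetSum _ fun k _ => integrable_finsetSum _ fun l _ => hint i j p q k l]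
  refine Finset.sum_congr rfl fun j _ => ?_
  rw [integral_finsetSum _ fun p _ => integrable_finsetSum _ fun q _ =>
    integrable_finsetSum _ fun k _ => integrable_finsetSum _ fun l _ => hint i j p q k l]
  refine Finset.sum_congr rfl fun p _ => ?_
  rw [integral_finsetSum _ fun q _ =>
    integrable_finsetSum _ fun k _ => integrable_finsetSum _ fun l _ => hint i j p q k l]
  refine Finset.sum_congr rfl fun q _ => ?_
  rw [integral_finsetSum _ fun k _ => integrable_finsetSum _ fun l _ => hint i j p q k l]
  have hval : ∀ k l : Fin M, ∫ z : (Fin D → ℝ) × (Fin M → Fin D → ℝ),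
        (1 / (M : ℝ)) * (1 / (M : ℝ)) *
          ((uVec pm θstar i j z.1 a * uVec pm θstar p q z.1 b) *
            ((z.2 k i * z.2 k j) * (z.2 l p * z.2 l q)))
        ∂(μd.prod (Measure.pi fun _ : Fin M => μv))
      = (1 / (M : ℝ)) * (1 / (M : ℝ)) * (if k = l then ∫ v, v i * v j * v p * v q ∂μv
          else (∫ v, v i * v j ∂μv) * (∫ v, v p * v q ∂μv))
          * ∫ x, uVec pm θstar i j x a * uVec pm θstar p q x b ∂μd := by
    intro k l
    rw [integral_const_mul, integral_prod_mul
      (fun x => uVec pm θstar i j x a * uVec pm θstar p q x b)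
      (fun vs : Fin M → Fin D → ℝ => (vs k i * vs k j) * (vs l p * vs l q)),
      (aux_moment μv hv4 i j p q k l).2]
    ring
  rw [← aux_count M hM, Finset.mul_sum, Finset.sum_mul]
  refine Finset.sum_congr rfl fun k _ => ?_
  rw [integral_finsetSum _ fun l _ => hint i j p q k l, Finset.mul_sum, Finset.sum_mul]
  exact Finset.sum_congr rfl fun l _ => hval k l
end
end

section
/- If p_v is the multivariate standard normal distribution N(0, I_D), then under the assumptions below, Var_{p_d, p_v}[∇_θ f(θ*; x, v_1^M)] = Σ_{i,j} V_{ij} + (2/M) Σ_i V_{ii} + (2/M) Σ_{i≠j} W_{ij}. (Lemma B.6 of the paper, Gaussian case.) -/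
open MeasureTheory

noncomputable section

open ProbabilityTheory in
lemma gauss_int_pow (n : ℕ) : Integrable (fun x : ℝ => x ^ n) (gaussianReal 0 1) := by
  have := integrable_pow_of_mem_interior_integrableExpSet (X := id) (μ := gaussianReal 0 1)
    (by simp [integrableExpSet_id_gaussianReal]) n
  simpa using this

lemma deriv_mul_gauss (P P' : ℝ → ℝ) (hP : ∀ t, HasDerivAt P (P' t) t) :
    deriv (fun t => P t * Real.exp (t ^ 2 / 2))
      = fun t => (P' t + t * P t) * Real.exp (t ^ 2 / 2) := by
  funext t
  have h1 : HasDerivAt (fun t : ℝ => t ^ 2 / 2) t t := by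
    have := (hasDerivAt_pow 2 t).div_const 2
    convert! this using 1
    simp
  have := ((hP t).mul h1.exp).deriv
  rw [show (fun t => P t * Real.exp (t ^ 2 / 2)) = P * fun t => Real.exp (t ^ 2 / 2) from rfl, this]
  ring

open ProbabilityTheory in
lemma gauss_moments : (∫ x : ℝ, x ^ 0 ∂(gaussianReal 0 1) = 1) ∧
    (∫ x : ℝ, x ^ 1 ∂(gaussianReal 0 1) = 0) ∧ (∫ x : ℝ, x ^ 2 ∂(gaussianReal 0 1) = 1) ∧
    (∫ x : ℝ, x ^ 4 ∂(gaussianReal 0 1) = 3) := by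
  have key : ∀ n : ℕ, ∫ x : ℝ, x ^ n ∂(gaussianReal 0 1)
      = iteratedDeriv n (fun t : ℝ => (1 : ℝ) * Real.exp (t ^ 2 / 2)) 0 := by
    intro n
    have := iteratedDeriv_mgf_zero (X := id) (μ := gaussianReal 0 1)
      (by simp [integrableExpSet_id_gaussianReal]) n
    rw [mgf_id_gaussianReal] at this
    simp only [NNReal.coe_one, zero_mul, zero_add, one_mul] at this ⊢
    rw [this]
    simp
  have d1 := deriv_mul_gauss (fun _ => 1) (fun _ => 0) (fun t => hasDerivAt_const t 1)
  have d2 := deriv_mul_gauss (fun t => 0 + t * 1) (fun _ => 1) (fun t => by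
    simpa using hasDerivAt_id' t)
  have d3 := deriv_mul_gauss (fun t => 1 + t * (0 + t * 1)) (fun t => 2 * t) (fun t => by
    have := (hasDerivAt_pow 2 t).const_add 1
    simp only [Nat.cast_ofNat, Nat.add_one_sub_one, pow_one] at this
    convert! this using 2
    simp; ring)
  have d4 := deriv_mul_gauss (fun t => 2 * t + t * (1 + t * (0 + t * 1)))
      (fun t => 3 + 3 * t ^ 2) (fun t => by
    have := (hasDerivAt_pow 3 t).add ((hasDerivAt_id t).const_mul 3)
    convert! this using 1
    · funext t; simp; ring
    · norm_num; ring)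
  refine ⟨by simp, ?_, ?_, ?_⟩
  · rw [key, iteratedDeriv_one, d1]; simp
  · rw [key, iteratedDeriv_succ, iteratedDeriv_one, d1, d2]; simp
  · rw [key, iteratedDeriv_succ, iteratedDeriv_succ, iteratedDeriv_succ, iteratedDeriv_one,
      d1, d2, d3, d4]; simp

lemma comb_prod {α : Type*} [Fintype α] [DecidableEq α] (G : ℕ → ℝ) (h0 : G 0 = 1)
    (h1 : G 1 = 0) (h2 : G 2 = 1) (h4 : G 4 = 3) (a b c d : α) :
    ∏ s, G ((if s = a then 1 else 0) + (if s = b then 1 else 0) + (if s = c then 1 else 0)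
        + (if s = d then 1 else 0))
      = (if a = b ∧ c = d then 1 else 0) + (if a = c ∧ b = d then 1 else 0)
        + (if a = d ∧ b = c then 1 else 0) := by
  by_cases hab : a = b
  · subst hab
    by_cases hcd : c = d
    · subst hcd
      by_cases hac : a = c
      · subst hac
        rw [Finset.prod_eq_single a]
        · simp [h4]; norm_num
        · intro s _ hs; simp [hs, h0]
        · simp
      · rw [Finset.prod_eq_one]
        · simp [hac]
        · intro s _
          by_cases h : s = a
          · subst h; simp [hac, h2]
          · by_cases h' : s = c
            · subst h'; simp [h, h2]
            · simp [h, h', h0]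
    · by_cases hac : a = c
      · subst hac
        rw [Finset.prod_eq_zero (Finset.mem_univ d)]
        · simp [hcd]
        · simp [Ne.symm hcd, h1]
      · rw [Finset.prod_eq_zero (Finset.mem_univ c)]
        · simp [hcd, hac]
        · simp [hcd, Ne.symm hac, h1]
  · by_cases hac : a = c
    · subst hac
      by_cases hbd : b = d
      · subst hbd
        rw [Finset.prod_eq_one]
        · simp [hab]
        · intro s _
          by_cases h : s = a
          · subst h; simp [hab, h2]
          · by_cases h' : s = b
            · subst h'; simp [h, h2]
            · simp [h, h', h0]
      · rw [Finset.prod_eq_zero (Finset.mem_univ b)]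
        · simp [hab, hbd, Ne.symm hab]
        · simp [hbd, Ne.symm hab, h1]
    · by_cases had : a = d
      · subst had
        by_cases hbc : b = c
        · subst hbc
          rw [Finset.prod_eq_one]
          · simp [hab]
          · intro s _
            by_cases h : s = a
            · subst h; simp [hab, h2]
            · by_cases h' : s = b
              · subst h'; simp [h, h2]
              · simp [h, h', h0]
        · rw [Finset.prod_eq_zero (Finset.mem_univ b)]
          · simp [hab, hbc, Ne.symm hab, hac]
          · simp [hbc, Ne.symm hab, h1]
      · rw [Finset.prod_eq_zero (Finset.mem_univ a)]
        · simp [hab, hac, had]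
        · simp [hab, hac, had, h1]

/-- multiplicity of an index pair in a quartic monomial -/
def cnt {α : Type*} [DecidableEq α] (a b c d s : α) : ℕ :=
  (if s = a then 1 else 0) + (if s = b then 1 else 0) + (if s = c then 1 else 0)
        + (if s = d then 1 else 0)

lemma monomial_eq {α : Type*} [Fintype α] [DecidableEq α] (w : α → ℝ) (a b c d : α) :
    w a * w b * (w c * w d) = ∏ s, w s ^ cnt a b c d s := by
  simp only [cnt, pow_add, Finset.prod_mul_distrib, pow_ite, pow_one, pow_zero,
    Finset.prod_ite_eq', Finset.mem_univ, if_true]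
  ring

open ProbabilityTheory in
lemma quartic_moment {D M : ℕ} (a b c d : Fin M × Fin D) :
    Integrable (fun v : Fin M → Fin D → ℝ =>
        v a.1 a.2 * v b.1 b.2 * (v c.1 c.2 * v d.1 d.2))
      (Measure.pi fun _ : Fin M => Measure.pi fun _ : Fin D => gaussianReal 0 1) ∧
    ∫ v : Fin M → Fin D → ℝ, v a.1 a.2 * v b.1 b.2 * (v c.1 c.2 * v d.1 d.2)
      ∂(Measure.pi fun _ : Fin M => Measure.pi fun _ : Fin D => gaussianReal 0 1)
      = (if a = b ∧ c = d then 1 else 0) + (if a = c ∧ b = d then 1 else 0)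
        + (if a = d ∧ b = c then 1 else 0) := by
  have e : (fun v : Fin M → Fin D → ℝ => v a.1 a.2 * v b.1 b.2 * (v c.1 c.2 * v d.1 d.2))
      = fun v => ∏ k, ∏ i, (v k i) ^ cnt a b c d (k, i) := by
    funext v
    rw [← Fintype.prod_prod_type (fun s : Fin M × Fin D => (v s.1 s.2) ^ cnt a b c d s)]
    exact monomial_eq (fun s : Fin M × Fin D => v s.1 s.2) a b c d
  rw [e]
  constructor
  · exact Integrable.fintype_prod
      (f := fun k (y : Fin D → ℝ) => ∏ i, (y i) ^ cnt a b c d (k, i)) fun k =>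
      Integrable.fintype_prod (f := fun i (y : ℝ) => y ^ cnt a b c d (k, i)) fun i =>
        gauss_int_pow _
  · rw [integral_fintype_prod_eq_prod
      (f := fun k (y : Fin D → ℝ) => ∏ i, (y i) ^ cnt a b c d (k, i))]
    have : ∀ k, ∫ y : Fin D → ℝ, ∏ i, (y i) ^ cnt a b c d (k, i)
          ∂(Measure.pi fun _ : Fin D => gaussianReal 0 1)
        = ∏ i, ∫ y : ℝ, y ^ cnt a b c d (k, i) ∂(gaussianReal 0 1) := fun k =>
      integral_fintype_prod_eq_prod (f := fun i (y : ℝ) => y ^ cnt a b c d (k, i))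
    simp only [this]
    rw [← Fintype.prod_prod_type
      (fun s : Fin M × Fin D => ∫ y : ℝ, y ^ cnt a b c d s ∂(gaussianReal 0 1))]
    obtain ⟨h0, h1, h2, h4⟩ := gauss_moments
    exact comb_prod (fun n => ∫ y : ℝ, y ^ n ∂(gaussianReal 0 1)) h0 h1 h2 h4 a b c d

section smooth
variable {D K : ℕ} {pm : EuclideanSpace ℝ (Fin K) → (Fin D → ℝ) → ℝ}

lemma dLx_smooth (hsmooth : ContDiff ℝ (⊤ : ℕ∞)
      (fun p : EuclideanSpace ℝ (Fin K) × (Fin D → ℝ) => Real.log (pm p.1 p.2))) (i : Fin D) :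
    ContDiff ℝ (⊤ : ℕ∞)
      (fun p : EuclideanSpace ℝ (Fin K) × (Fin D → ℝ) => dLx pm p.1 p.2 i) := by
  unfold dLx
  refine ContDiff.fderiv_apply (m := (⊤ : ℕ∞))
    (f := fun (p : EuclideanSpace ℝ (Fin K) × (Fin D → ℝ)) (y : Fin D → ℝ) =>
      Real.log (pm p.1 y)) ?_ contDiff_snd contDiff_const (by simp)
  exact hsmooth.comp ((contDiff_fst.comp contDiff_fst).prodMk contDiff_snd)

lemma d2Lx_smooth (hsmooth : ContDiff ℝ (⊤ : ℕ∞)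
      (fun p : EuclideanSpace ℝ (Fin K) × (Fin D → ℝ) => Real.log (pm p.1 p.2))) (i j : Fin D) :
    ContDiff ℝ (⊤ : ℕ∞)
      (fun p : EuclideanSpace ℝ (Fin K) × (Fin D → ℝ) => d2Lx pm p.1 p.2 i j) := by
  unfold d2Lx
  refine ContDiff.fderiv_apply (m := (⊤ : ℕ∞))
    (f := fun (p : EuclideanSpace ℝ (Fin K) × (Fin D → ℝ)) (y : Fin D → ℝ) =>
      dLx pm p.1 y j) ?_ contDiff_snd contDiff_const (by simp)
  exact (dLx_smooth hsmooth j).comp ((contDiff_fst.comp contDiff_fst).prodMk contDiff_snd)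

lemma d2Lx_symm (hsmooth : ContDiff ℝ (⊤ : ℕ∞)
      (fun p : EuclideanSpace ℝ (Fin K) × (Fin D → ℝ) => Real.log (pm p.1 p.2)))
    (θ : EuclideanSpace ℝ (Fin K)) (x : Fin D → ℝ) (i j : Fin D) :
    d2Lx pm θ x i j = d2Lx pm θ x j i := by
  have hf : ContDiff ℝ (⊤ : ℕ∞) (fun y => Real.log (pm θ y)) :=
    hsmooth.comp (contDiff_const.prodMk contDiff_id)
  have hs : IsSymmSndFDerivAt ℝ (fun y => Real.log (pm θ y)) x :=
    hf.contDiffAt.isSymmSndFDerivAt (by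
      simp only [minSmoothness_of_isRCLikeNormedField]
      exact WithTop.coe_le_coe.mpr (le_top : (2 : ℕ∞) ≤ ⊤))
  have hd : DifferentiableAt ℝ (fderiv ℝ (fun y => Real.log (pm θ y))) x :=
    ((hf.fderiv_right (m := (⊤ : ℕ∞)) (by simp)).differentiable (by simp)) x
  have e : ∀ i j, d2Lx pm θ x i j
      = fderiv ℝ (fderiv ℝ (fun y => Real.log (pm θ y))) x (Pi.single i 1) (Pi.single j 1) := by
    intro i j
    unfold d2Lx dLx
    rw [fderiv_clm_apply hd (differentiableAt_const _)]
    simp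
  rw [e, e]
  exact hs.eq _ _

lemma uVec_symm (hsmooth : ContDiff ℝ (⊤ : ℕ∞)
      (fun p : EuclideanSpace ℝ (Fin K) × (Fin D → ℝ) => Real.log (pm p.1 p.2)))
    (θ : EuclideanSpace ℝ (Fin K)) (x : Fin D → ℝ) (i j : Fin D) :
    uVec pm θ i j x = uVec pm θ j i x := by
  unfold uVec
  congr 2
  · funext θ; exact d2Lx_symm hsmooth θ x i j
  · congr 1; funext θ; ring

lemma gradF_eq {M : ℕ} (hsmooth : ContDiff ℝ (⊤ : ℕ∞)
      (fun p : EuclideanSpace ℝ (Fin K) × (Fin D → ℝ) => Real.log (pm p.1 p.2)))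
    (θ : EuclideanSpace ℝ (Fin K)) (x : Fin D → ℝ) (vs : Fin M → Fin D → ℝ) :
    gradF pm θ x vs = (1 / (M : ℝ)) • ∑ k, ∑ i, ∑ j, (vs k i * vs k j) • uVec pm θ i j x := by
  have hd1 : ∀ i, DifferentiableAt ℝ (fun θ => dLx pm θ x i) θ := fun i =>
    (((dLx_smooth hsmooth i).comp (contDiff_id.prodMk contDiff_const)).differentiable
      (by simp)) θ
  have hd2 : ∀ i j, DifferentiableAt ℝ (fun θ => d2Lx pm θ x i j) θ := fun i j =>
    (((d2Lx_smooth hsmooth i j).comp (contDiff_id.prodMk contDiff_const)).differentiable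
      (by simp)) θ
  have hu : ∀ i j, HasFDerivAt (fun θ => d2Lx pm θ x i j + (1/2) * (dLx pm θ x i * dLx pm θ x j))
      (InnerProductSpace.toDual ℝ _ (uVec pm θ i j x)) θ := by
    intro i j
    have := (hd2 i j).hasGradientAt.hasFDerivAt.add
      (((hd1 i).mul (hd1 j)).hasGradientAt.hasFDerivAt.const_mul (1/2))
    convert! this using 1
    simp [uVec]
    rfl
  have hF : (fun θ => avgF pm θ x vs) = fun θ => (1 / (M : ℝ)) * ∑ k, ∑ i, ∑ j,
      (vs k i * vs k j) * (d2Lx pm θ x i j + (1/2) * (dLx pm θ x i * dLx pm θ x j)) := by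
    funext θ
    unfold avgF
    congr 1
    refine Finset.sum_congr rfl fun k _ => ?_
    rw [sq, Finset.sum_mul_sum, Finset.mul_sum, ← Finset.sum_add_distrib]
    refine Finset.sum_congr rfl fun i _ => ?_
    rw [Finset.mul_sum, ← Finset.sum_add_distrib]
    refine Finset.sum_congr rfl fun j _ => ?_
    ring
  unfold gradF
  rw [hF]
  have := (HasFDerivAt.fun_sum (u := Finset.univ) fun (k : Fin M) _ =>
    HasFDerivAt.fun_sum (u := Finset.univ) fun (i : Fin D) _ =>
    HasFDerivAt.fun_sum (u := Finset.univ) fun (j : Fin D) _ =>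
      (hu i j).const_mul (vs k i * vs k j)).const_mul (1 / (M : ℝ))
  apply HasGradientAt.gradient
  rw [hasGradientAt_iff_hasFDerivAt]
  convert! this using 1
  simp [map_sum]

end smooth

lemma delta_sum (D M : ℕ) (hM : 1 ≤ M) (I : Fin D → Fin D → Fin D → Fin D → ℝ)
    (hI : ∀ i j p q, I i j p q = I i j q p) :
    (1 / (M : ℝ)) * (1 / (M : ℝ)) * ∑ k : Fin M, ∑ l : Fin M, ∑ i, ∑ j, ∑ p, ∑ q,
      I i j p q * ((if (k, i) = (k, j) ∧ (l, p) = (l, q) then 1 else 0)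
        + (if (k, i) = (l, p) ∧ (k, j) = (l, q) then 1 else 0)
        + (if (k, i) = (l, q) ∧ (k, j) = (l, p) then 1 else 0))
    = (∑ i, ∑ j, I i i j j) + (2 / (M : ℝ)) * (∑ i, I i i i i)
      + (2 / (M : ℝ)) * ∑ i, ∑ j, if i ≠ j then I i j i j else 0 := by
  have hM' : (M : ℝ) ≠ 0 := by positivity
  have h1 : ∀ k l : Fin M, (∑ i, ∑ j, ∑ p, ∑ q,
      I i j p q * ((if (k, i) = (k, j) ∧ (l, p) = (l, q) then 1 else 0)
        + (if (k, i) = (l, p) ∧ (k, j) = (l, q) then 1 else 0)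
        + (if (k, i) = (l, q) ∧ (k, j) = (l, p) then 1 else 0)))
      = (∑ i, ∑ j, I i i j j) + if k = l then 2 * ∑ i, ∑ j, I i j i j else 0 := by
    intro k l
    by_cases hkl : k = l
    · subst hkl
      simp only [Prod.mk.injEq, true_and, mul_add, Finset.sum_add_distrib, ite_and, mul_ite,
        mul_one, mul_zero, Finset.sum_ite_eq, Finset.mem_univ, if_true, Finset.sum_const_zero,
        Finset.sum_ite_irrel, hI _ _ _ _, add_assoc, two_mul]
    · simp only [Prod.mk.injEq, true_and, hkl, false_and, mul_add, Finset.sum_add_distrib, ite_and, mul_ite,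
        mul_one, mul_zero, Finset.sum_ite_eq, Finset.mem_univ, if_true, if_false, Finset.sum_const_zero,
        Finset.sum_ite_irrel, add_zero]
  have h2 : ∑ i, ∑ j, I i j i j
      = (∑ i, I i i i i) + ∑ i, ∑ j, if i ≠ j then I i j i j else 0 := by
    rw [← Finset.sum_add_distrib]
    refine Finset.sum_congr rfl fun i _ => ?_
    have : I i i i i = ∑ j, if i = j then I i j i j else 0 := by simp
    rw [this, ← Finset.sum_add_distrib]
    refine Finset.sum_congr rfl fun j _ => ?_
    by_cases h : i = j <;> simp [h]
  simp only [h1, Finset.sum_add_distrib, Finset.sum_const, Finset.card_univ, Fintype.card_fin,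
    Finset.sum_ite_eq, Finset.mem_univ, if_true, h2, nsmul_eq_mul]
  field_simp
  ring

/-- **Lemma B.6 of the paper (Gaussian case).** If `p_v = N(0, I_D)`, the covariance of
`∇_θ f(θ*; x, v_1^M)` equals `Σ_{ij} V_{ij} + (2/M) Σ_i V_{ii} + (2/M) Σ_{i≠j} W_{ij}`. -/
theorem variance_of_sliced_gradient_gaussian
    (D K M : ℕ) (hD : 1 ≤ D) (hM : 1 ≤ M)
    (pd : (Fin D → ℝ) → ℝ)
    (pm : EuclideanSpace ℝ (Fin K) → (Fin D → ℝ) → ℝ)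
    (θstar : EuclideanSpace ℝ (Fin K))
    (μd μv : Measure (Fin D → ℝ)) [IsProbabilityMeasure μd] [IsProbabilityMeasure μv]
    -- data density: positive, differentiable; μd is the data distribution
    (hpd_pos : ∀ x, 0 < pd x) (hpd_diff : Differentiable ℝ pd)
    (hμd : μd = volume.withDensity (fun x => ENNReal.ofReal (pd x)))
    -- p_v is the multivariate standard normal N(0, I_D)
    (hμv : μv = Measure.pi fun _ : Fin D => ProbabilityTheory.gaussianReal 0 1)
    -- model densities: positive, with all relevant derivatives existing
    (hpm_pos : ∀ θ x, 0 < pm θ x)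
    (hsmooth : ContDiff ℝ (⊤ : ℕ∞)
      (fun p : EuclideanSpace ℝ (Fin K) × (Fin D → ℝ) => Real.log (pm p.1 p.2)))
    -- well-specified: p_d = p_m(·; θ*)
    (hws : pd = pm θstar)
    -- all expectations below are finite
    (hg_int : ∀ a : Fin K,
      Integrable (fun z : (Fin D → ℝ) × (Fin M → Fin D → ℝ) => gradF pm θstar z.1 z.2 a)
        (μd.prod (Measure.pi fun _ : Fin M => μv)))
    (hgg_int : ∀ a b : Fin K,
      Integrable (fun z : (Fin D → ℝ) × (Fin M → Fin D → ℝ) =>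
          gradF pm θstar z.1 z.2 a * gradF pm θstar z.1 z.2 b)
        (μd.prod (Measure.pi fun _ : Fin M => μv)))
    (huu_int : ∀ (i j p q : Fin D) (a b : Fin K),
      Integrable (fun x => uVec pm θstar i j x a * uVec pm θstar p q x b) μd)
    -- the assumptions of Theorem 1 hold, so the gradient has zero mean at θ*
    (hmean : ∀ a : Fin K,
      ∫ z : (Fin D → ℝ) × (Fin M → Fin D → ℝ), gradF pm θstar z.1 z.2 a
        ∂(μd.prod (Measure.pi fun _ : Fin M => μv)) = 0) :
    ∀ a b : Fin K,
      (∫ z : (Fin D → ℝ) × (Fin M → Fin D → ℝ),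
          gradF pm θstar z.1 z.2 a * gradF pm θstar z.1 z.2 b
          ∂(μd.prod (Measure.pi fun _ : Fin M => μv)))
        - (∫ z : (Fin D → ℝ) × (Fin M → Fin D → ℝ), gradF pm θstar z.1 z.2 a
            ∂(μd.prod (Measure.pi fun _ : Fin M => μv)))
          * (∫ z : (Fin D → ℝ) × (Fin M → Fin D → ℝ), gradF pm θstar z.1 z.2 b
              ∂(μd.prod (Measure.pi fun _ : Fin M => μv)))
      = (∑ i, ∑ j, ∫ x, uVec pm θstar i i x a * uVec pm θstar j j x b ∂μd)
        + (2 / (M : ℝ)) * (∑ i, ∫ x, uVec pm θstar i i x a * uVec pm θstar i i x b ∂μd)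
        + (2 / (M : ℝ)) * (∑ i, ∑ j, if i ≠ j then
            ∫ x, uVec pm θstar i j x a * uVec pm θstar i j x b ∂μd else 0) := by
  intro a b
  rw [hmean a, zero_mul, sub_zero]
  subst hμv
  have hprod : ∀ z : (Fin D → ℝ) × (Fin M → Fin D → ℝ),
      gradF pm θstar z.1 z.2 a * gradF pm θstar z.1 z.2 b
      = (1 / (M : ℝ)) * (1 / (M : ℝ)) * ∑ k : Fin M, ∑ l : Fin M, ∑ i, ∑ j, ∑ p, ∑ q,
        (uVec pm θstar i j z.1 a * uVec pm θstar p q z.1 b)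
          * (z.2 k i * z.2 k j * (z.2 l p * z.2 l q)) := by
    intro z
    have hc : ∀ c, gradF pm θstar z.1 z.2 c
        = (1 / (M : ℝ)) * ∑ k, ∑ i, ∑ j, (z.2 k i * z.2 k j) * uVec pm θstar i j z.1 c := by
      intro c
      rw [gradF_eq hsmooth]
      simp
    rw [hc, hc, mul_mul_mul_comm]
    congr 1
    rw [Finset.sum_mul_sum]
    refine Finset.sum_congr rfl fun k _ => Finset.sum_congr rfl fun l _ => ?_
    rw [Finset.sum_mul]
    refine Finset.sum_congr rfl fun i _ => ?_
    rw [Finset.sum_mul]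
    refine Finset.sum_congr rfl fun j _ => ?_
    rw [Finset.mul_sum]
    refine Finset.sum_congr rfl fun p _ => ?_
    rw [Finset.mul_sum]
    refine Finset.sum_congr rfl fun q _ => ?_
    ring
  have hint : ∀ (k l : Fin M) (i j p q : Fin D),
      Integrable (fun z : (Fin D → ℝ) × (Fin M → Fin D → ℝ) =>
        (uVec pm θstar i j z.1 a * uVec pm θstar p q z.1 b)
          * (z.2 k i * z.2 k j * (z.2 l p * z.2 l q)))
        (μd.prod (Measure.pi fun _ : Fin M => Measure.pi fun _ : Fin D =>
          ProbabilityTheory.gaussianReal 0 1)) := fun k l i j p q =>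
    (huu_int i j p q a b).mul_prod (quartic_moment (k, i) (k, j) (l, p) (l, q)).1
  have hval : ∀ (k l : Fin M) (i j p q : Fin D),
      ∫ z : (Fin D → ℝ) × (Fin M → Fin D → ℝ),
        (uVec pm θstar i j z.1 a * uVec pm θstar p q z.1 b)
          * (z.2 k i * z.2 k j * (z.2 l p * z.2 l q))
        ∂(μd.prod (Measure.pi fun _ : Fin M => Measure.pi fun _ : Fin D =>
          ProbabilityTheory.gaussianReal 0 1))
      = (∫ x, uVec pm θstar i j x a * uVec pm θstar p q x b ∂μd)
        * ((if (k, i) = (k, j) ∧ (l, p) = (l, q) then 1 else 0)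
        + (if (k, i) = (l, p) ∧ (k, j) = (l, q) then 1 else 0)
        + (if (k, i) = (l, q) ∧ (k, j) = (l, p) then 1 else 0)) := fun k l i j p q => by
    rw [← (quartic_moment (k, i) (k, j) (l, p) (l, q)).2]
    exact integral_prod_mul (fun x => uVec pm θstar i j x a * uVec pm θstar p q x b)
      (fun v : Fin M → Fin D → ℝ => v k i * v k j * (v l p * v l q))
  simp only [hprod]
  rw [integral_const_mul, ← delta_sum D M hM
    (fun i j p q => ∫ x, uVec pm θstar i j x a * uVec pm θstar p q x b ∂μd)]
  · congr 1
    rw [integral_finsetSum _ fun k _ => integrable_finsetSum _ fun l _ =>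
      integrable_finsetSum _ fun i _ => integrable_finsetSum _ fun j _ =>
      integrable_finsetSum _ fun p _ => integrable_finsetSum _ fun q _ => hint k l i j p q]
    refine Finset.sum_congr rfl fun k _ => ?_
    rw [integral_finsetSum _ fun l _ =>
      integrable_finsetSum _ fun i _ => integrable_finsetSum _ fun j _ =>
      integrable_finsetSum _ fun p _ => integrable_finsetSum _ fun q _ => hint k l i j p q]
    refine Finset.sum_congr rfl fun l _ => ?_
    rw [integral_finsetSum _ fun i _ => integrable_finsetSum _ fun j _ =>
      integrable_finsetSum _ fun p _ => integrable_finsetSum _ fun q _ => hint k l i j p q]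
    refine Finset.sum_congr rfl fun i _ => ?_
    rw [integral_finsetSum _ fun j _ =>
      integrable_finsetSum _ fun p _ => integrable_finsetSum _ fun q _ => hint k l i j p q]
    refine Finset.sum_congr rfl fun j _ => ?_
    rw [integral_finsetSum _ fun p _ => integrable_finsetSum _ fun q _ => hint k l i j p q]
    refine Finset.sum_congr rfl fun p _ => ?_
    rw [integral_finsetSum _ fun q _ => hint k l i j p q]
    exact Finset.sum_congr rfl fun q _ => hval k l i j p q
  · intro i j p q
    simp only [uVec_symm hsmooth θstar _ p q]
end
end

section
/- Let g : ℝ^D → ℝ be twice differentiable at x with gradient ∇g(x) and Hessian H(x). Then, as v → 0 in ℝ^D, log( e^{g(x)} + e^{g(x+v)} ) = g(x) + log 2 + ½ ( ∇g(x)^⊤ v + ½ v^⊤ H(x) v ) + ⅛ ( ∇g(x)^⊤ v )² + o(‖v‖²). (The key expansion in Proposition C.1 connecting noise contrastive estimation to sliced score matching.) -/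
open RealInnerProductSpace Asymptotics Filter

noncomputable section

/-- Second-order Taylor expansion of the softplus function at zero. -/
theorem softplus_taylor :
    (fun u : ℝ => Real.log (1 + Real.exp u) - (Real.log 2 + u / 2 + u ^ 2 / 8))
      =o[nhds (0 : ℝ)] (fun u => u ^ 2) := by
  have hd : ∀ u : ℝ, HasDerivAt
      (fun u : ℝ => Real.log (1 + Real.exp u) - (Real.log 2 + u / 2 + u ^ 2 / 8))
      (Real.exp u / (1 + Real.exp u) - (1 / 2 + u / 4)) u := by
    intro u
    have hp : (1 + Real.exp u) ≠ 0 := by positivity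
    have h1 := ((Real.hasDerivAt_exp u).const_add 1).log hp
    have h2 := (((hasDerivAt_id u).div_const 2).const_add (Real.log 2)).add
      (((hasDerivAt_id u).pow 2).div_const 8)
    refine (h1.sub h2).congr_deriv ?_
    simp
    ring
  have hs : HasDerivAt (fun u : ℝ => Real.exp u / (1 + Real.exp u)) (1 / 4) 0 := by
    have hp : (1 + Real.exp 0) ≠ 0 := by positivity
    refine ((Real.hasDerivAt_exp 0).div ((Real.hasDerivAt_exp 0).const_add 1) hp).congr_deriv ?_
    simp
    norm_num
  have ho := hs.isLittleO
  rw [isLittleO_iff] at ho ⊢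
  intro c hc
  obtain ⟨δ, hδ, hb⟩ := Metric.eventually_nhds_iff.1 (ho hc)
  refine Metric.eventually_nhds_iff.2 ⟨δ, hδ, fun u hu => ?_⟩
  have key := (convex_segment (𝕜 := ℝ) (0 : ℝ) u).norm_image_sub_le_of_norm_hasDerivWithin_le
    (C := c * |u|) (fun y _ => (hd y).hasDerivWithinAt) ?_
    (left_mem_segment ℝ 0 u) (right_mem_segment ℝ 0 u)
  · norm_num at key ⊢
    rw [pow_two u] at *
    calc _ ≤ _ := key
      _ = _ := by rw [mul_assoc, abs_mul_abs_self]
  · intro y hy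
    have hyu : |y| ≤ |u| := by
      obtain ⟨t, ht, rfl⟩ := (segment_eq_image ℝ (0 : ℝ) u) ▸ hy
      simp only [smul_eq_mul, mul_zero, zero_add, abs_mul, abs_of_nonneg ht.1]
      exact mul_le_of_le_one_left (abs_nonneg _) ht.2
    have := hb (y := y) (by
      simp only [dist_zero_right, Real.norm_eq_abs] at hu ⊢
      exact lt_of_le_of_lt hyu hu)
    norm_num at this ⊢
    have e : Real.exp y / (1 + Real.exp y) - (1 / 2 + y / 4)
        = Real.exp y / (1 + Real.exp y) - 1 / 2 - y * (1 / 4) := by ring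
    rw [e]
    exact this.trans (mul_le_mul_of_nonneg_left hyu hc.le)

/-- Second-order Peano-type Taylor expansion for a twice differentiable function. -/
theorem taylor_two {E : Type*} [NormedAddCommGroup E] [InnerProductSpace ℝ E] [CompleteSpace E]
    (g : E → ℝ) (x : E) (g' : E → E) (H : E →L[ℝ] E)
    (hg' : ∀ᶠ y in nhds x, HasGradientAt g (g' y) y) (hH : HasFDerivAt g' H x) :
    (fun v => g (x + v) - g x - (⟪g' x, v⟫ + (1/2) * ⟪v, H v⟫))
      =o[nhds (0 : E)] (fun v => ‖v‖ ^ 2) := by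
  have ho := hH.isLittleO
  rw [isLittleO_iff] at ho ⊢
  intro c hc
  obtain ⟨δ, hδ, hb⟩ := Metric.eventually_nhds_iff.1 ((ho hc).and hg')
  refine Metric.eventually_nhds_iff.2 ⟨δ, hδ, fun v hv => ?_⟩
  rw [dist_zero_right] at hv
  have hmem : ∀ t ∈ Set.Icc (0 : ℝ) 1, dist (x + t • v) x < δ := by
    intro t ht
    rw [dist_eq_norm, add_sub_cancel_left, norm_smul, Real.norm_of_nonneg ht.1]
    exact lt_of_le_of_lt (mul_le_of_le_one_left (norm_nonneg _) ht.2) hv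
  have hd : ∀ t ∈ Set.Icc (0 : ℝ) 1, HasDerivWithinAt
      (fun t : ℝ => g (x + t • v) - (t * ⟪g' x, v⟫ + t ^ 2 * ((1 / 2) * ⟪v, H v⟫)))
      (⟪g' (x + t • v), v⟫ - (⟪g' x, v⟫ + t * ⟪v, H v⟫)) (Set.Icc 0 1) t := by
    intro t ht
    have h1 := (hb (hmem t ht)).2.hasFDerivAt
    have hl : HasDerivAt (fun t : ℝ => x + t • v) v t := by
      simpa using ((hasDerivAt_id t).smul_const v).const_add x
    have h2 := h1.comp_hasDerivAt t hl
    have h3 := ((hasDerivAt_id t).mul_const ⟪g' x, v⟫).add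
      (((hasDerivAt_id t).pow 2).mul_const ((1 / 2) * ⟪v, H v⟫))
    refine ((h2.sub h3).congr_deriv ?_).hasDerivWithinAt
    simp
    ring
  have key := norm_image_sub_le_of_norm_deriv_le_segment_01' (C := c * ‖v‖ ^ 2) hd ?_
  · have e : g (x + v) - g x - (⟪g' x, v⟫ + (1/2) * ⟪v, H v⟫) =
      g (x + (1 : ℝ) • v) - (1 * ⟪g' x, v⟫ + 1 ^ 2 * ((1 / 2) * ⟪v, H v⟫)) -
      (g (x + (0 : ℝ) • v) - (0 * ⟪g' x, v⟫ + 0 ^ 2 * ((1 / 2) * ⟪v, H v⟫))) := by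
      simp
      ring
    rw [e, norm_pow, norm_norm]
    exact key
  · intro t ht
    have ht' : t ∈ Set.Icc (0 : ℝ) 1 := ⟨ht.1, ht.2.le⟩
    have h1 := (hb (hmem t ht')).1
    rw [add_sub_cancel_left] at h1
    have e : ⟪g' (x + t • v), v⟫ - (⟪g' x, v⟫ + t * ⟪v, H v⟫) =
        ⟪g' (x + t • v) - g' x - H (t • v), v⟫ := by
      rw [inner_sub_left, inner_sub_left, map_smul, real_inner_smul_left,
        real_inner_comm v (H v)]
      ring
    rw [e]
    have h2 : ‖t • v‖ ≤ ‖v‖ := by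
      rw [norm_smul, Real.norm_of_nonneg ht.1]
      exact mul_le_of_le_one_left (norm_nonneg _) ht.2.le
    calc _ ≤ ‖g' (x + t • v) - g' x - H (t • v)‖ * ‖v‖ := norm_inner_le_norm _ _
      _ ≤ (c * ‖v‖) * ‖v‖ := by
        gcongr
        exact h1.trans (by gcongr)
      _ = _ := by ring

/-- **The key Taylor expansion in Proposition C.1 of the paper**, connecting noise
contrastive estimation to sliced score matching: if `g` is twice differentiable at `x`
(with gradient field `g'` near `x` and Hessian `H` at `x`), then as `v → 0`,
`log(e^{g(x)} + e^{g(x+v)}) = g(x) + log 2 + ½(∇g(x)ᵀv + ½ vᵀH(x)v) + ⅛(∇g(x)ᵀv)² + o(‖v‖²)`. -/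
theorem nce_log_sum_exp_expansion
    (D : ℕ) (g : EuclideanSpace ℝ (Fin D) → ℝ) (x : EuclideanSpace ℝ (Fin D))
    (g' : EuclideanSpace ℝ (Fin D) → EuclideanSpace ℝ (Fin D))
    (H : EuclideanSpace ℝ (Fin D) →L[ℝ] EuclideanSpace ℝ (Fin D))
    (hg' : ∀ᶠ y in nhds x, HasGradientAt g (g' y) y)
    (hH : HasFDerivAt g' H x) :
    (fun v => Real.log (Real.exp (g x) + Real.exp (g (x + v)))
        - (g x + Real.log 2 + (1/2) * (⟪g' x, v⟫ + (1/2) * ⟪v, H v⟫)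
          + (1/8) * ⟪g' x, v⟫ ^ 2))
      =o[nhds (0 : EuclideanSpace ℝ (Fin D))] (fun v => ‖v‖ ^ 2) := by
  have hT := taylor_two g x g' H hg' hH
  have hgx : HasGradientAt g (g' x) x := hg'.self_of_nhds
  have hA : (fun v => g (x + v) - g x - ⟪g' x, v⟫) =o[nhds 0] (fun v => ‖v‖) := by
    have := (hasFDerivAt_iff_isLittleO_nhds_zero.1 hgx.hasFDerivAt).norm_right
    simpa using this
  have hL : (fun v => ⟪g' x, v⟫) =O[nhds 0] (fun v => ‖v‖) :=
    IsBigO.of_bound ‖g' x‖ (Eventually.of_forall fun v => by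
      simpa using norm_inner_le_norm (𝕜 := ℝ) (g' x) v)
  have hU : (fun v => g (x + v) - g x) =O[nhds 0] (fun v => ‖v‖) := by
    simpa using hA.isBigO.add hL
  have hU0 : Tendsto (fun v => g (x + v) - g x) (nhds 0) (nhds 0) :=
    hU.trans_tendsto tendsto_norm_zero
  have hS := (softplus_taylor.comp_tendsto hU0).trans_isBigO (hU.pow 2)
  have hQ : (fun v => (g (x + v) - g x) ^ 2 - ⟪g' x, v⟫ ^ 2) =o[nhds 0]
      (fun v => ‖v‖ ^ 2) := by
    refine (hA.mul_isBigO (hU.add hL)).congr (fun v => ?_) (fun v => ?_) <;> ring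
  refine ((hS.add (hT.const_mul_left (1/2))).add (hQ.const_mul_left (1/8))).congr_left
    (fun v => ?_)
  have e : Real.log (Real.exp (g x) + Real.exp (g (x + v))) =
      g x + Real.log (1 + Real.exp (g (x + v) - g x)) := by
    have hp : (1 + Real.exp (g (x + v) - g x)) ≠ 0 := by positivity
    have h := Real.log_mul (Real.exp_ne_zero (g x)) hp
    rw [Real.log_exp, mul_add, ← Real.exp_add, mul_one, add_sub_cancel] at h
    exact h
  rw [e]
  simp only [Function.comp]
  ring
end
end
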